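/- For every prime m ≥ 2, there exist positive integers A and B with B < A such that b_4(An + B) ≡ 0 (mod m) for all nonnegative integers n. -/

import Mathlib

/-- `bReg k n` is the number of `k`-regular partitions of `n`,
i.e. partitions of `n` in which no part is divisible by `k`. -/
noncomputable def bReg (k n : ℕ) : ℕ :=
  (Finset.univ.filter fun p : n.Partition => ∀ i ∈ p.parts, ¬ k ∣ i).card

/-!
Let `f = η(4τ) / η(τ) = ∑ b₄(n) q^((8n + 1) / 8)`, a modular function for `Γ(32)`. Averaging over
the translates of `τ` by multiples of `32 / m` keeps the terms with `m ∣ 4 (8n + 1)`, and it also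
kills the pole of `f` at the cusps `γ∞` with `m² ∣ c`. At the other cusps the quotient
`Δ(τ)^(m²) / Δ(m²τ)`, whose `q`-series is `1` modulo `m`, has a zero large enough to cancel the
pole. The product is therefore a holomorphic form of positive weight for `Γ(N)`, `N = 32 m²`, with
integral coefficients `a(4 m² (8n + 1)) ≡ b₄(n)` modulo `m` whenever `m ∣ 4 (8n + 1)`.

Let `Q ≡ 1` modulo `N` be prime. The Hecke operators `T_{Q^r}` act on the finitely generated lattice
of integral `q`-expansions of this weight, where they satisfy a two-term recurrence that is
reversible modulo `m`. Hence `r ↦ T_{Q^r} a` is periodic modulo `m` and, run backwards from `r = 0`,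
it passes through `0`, so `a(Q^r n) ≡ 0` for some `r > 0` and all `n` prime to `Q`.
-/

open Asymptotics Complex CongruenceSubgroup Filter Function ModularForm
open UpperHalfPlane hiding I
open scoped Manifold MatrixGroups Pointwise Real Topology

local notation "𝕢" => Function.Periodic.qParam

namespace FourRegular

section QSeries

lemma qParam_natCast_mul (h : ℝ) (M : ℕ) (z : ℂ) : 𝕢 h (M * z) = 𝕢 h z ^ M := by
  rw [Periodic.qParam, Periodic.qParam, ← Complex.exp_nat_mul, mul_left_comm, mul_div_assoc]

lemma qParam_mul_natCast_pow (h : ℝ) {M : ℕ} (hM : M ≠ 0) (z : ℂ) :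
    𝕢 (h * M) z ^ M = 𝕢 h z := by
  have hM' : (M : ℂ) ≠ 0 := mod_cast hM
  rw [Periodic.qParam, Periodic.qParam, ← Complex.exp_nat_mul]
  push_cast
  congr 1
  field_simp

variable {h : ℝ} {f : ℍ → ℂ} {c : ℕ → ℂ} {B : ℕ}

lemma isBigO_qParam_pow_of_coeff_eq_zero (hh : 0 < h)
    (hf : ∀ τ : ℍ, HasSum (fun n ↦ c n * 𝕢 h τ ^ n) (f τ)) (hc : ∀ n < B, c n = 0) :
    f =O[atImInfty] fun τ ↦ 𝕢 h τ ^ B := by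
  have hne (τ : ℍ) : 𝕢 h τ ^ B ≠ 0 := pow_ne_zero _ (Periodic.qParam_ne_zero _)
  have hquot (τ : ℍ) : HasSum (fun n ↦ c (n + B) • 𝕢 h τ ^ n) (f τ / 𝕢 h τ ^ B) := by
    have htail := (hasSum_nat_add_iff' B).mpr (hf τ)
    rw [Finset.sum_eq_zero fun n hn ↦ by rw [hc n (Finset.mem_range.mp hn), zero_mul],
      sub_zero] at htail
    refine (htail.div_const (𝕢 h τ ^ B)).congr_fun fun n ↦ ?_
    rw [pow_add, smul_eq_mul, ← mul_assoc, mul_div_cancel_right₀ _ (hne τ)]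
  have hbdd : (fun τ : ℍ ↦ f τ / 𝕢 h τ ^ B) =O[atImInfty] (1 : ℍ → ℂ) :=
    (isBoundedAtImInfty_of_hasSum_qExpansion hh hquot).trans (.of_bound 1 (by simp))
  simpa [div_mul_cancel₀ _ (hne _)] using
    hbdd.mul (isBigO_refl (fun τ : ℍ ↦ 𝕢 h τ ^ B) atImInfty)

lemma coeff_eq_zero_of_isBigO_qParam_pow (hh : 0 < h)
    (hf : ∀ τ : ℍ, HasSum (fun n ↦ c n * 𝕢 h τ ^ n) (f τ))
    (hO : f =O[atImInfty] fun τ ↦ 𝕢 h τ ^ B) : ∀ n < B, c n = 0 := by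
  intro n
  induction n using Nat.strong_induction_on with | _ n ih =>
  intro hn
  have hq0 : Tendsto (fun τ : ℍ ↦ 𝕢 h τ) atImInfty (𝓝 0) := qParam_tendsto_atImInfty hh
  have hrest : (fun τ : ℍ ↦ f τ - c n * 𝕢 h τ ^ n) =O[atImInfty] fun τ ↦ 𝕢 h τ ^ (n + 1) := by
    refine isBigO_qParam_pow_of_coeff_eq_zero (c := fun i ↦ if i = n then 0 else c i) hh
      (fun τ ↦ ?_) fun i hi ↦ ?_
    · refine ((hf τ).sub (hasSum_ite_eq n (c n * 𝕢 h τ ^ n))).congr_fun fun i ↦ ?_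
      split_ifs with hi <;> simp [hi]
    · grind
  have hqpow : (fun τ : ℍ ↦ 𝕢 h τ ^ B) =O[atImInfty] fun τ ↦ 𝕢 h τ ^ (n + 1) := by
    refine .of_bound 1 (.of_forall fun τ ↦ ?_)
    rw [norm_pow, norm_pow, one_mul]
    exact pow_le_pow_of_le_one (norm_nonneg _) (Periodic.norm_qParam_lt_one hh τ.im_pos).le hn
  have hlead : (fun τ : ℍ ↦ c n * 𝕢 h τ ^ n) =O[atImInfty] fun τ ↦ 𝕢 h τ ^ (n + 1) := by
    simpa using (hO.trans hqpow).sub hrest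
  have hconst : (fun _ : ℍ ↦ c n) =O[atImInfty] fun τ ↦ 𝕢 h τ := by
    have hne (τ : ℍ) : 𝕢 h τ ^ n ≠ 0 := pow_ne_zero _ (Periodic.qParam_ne_zero _)
    simp_rw [mul_comm (c n)] at hlead
    simpa [pow_succ', mul_div_cancel_right₀ _ (hne _)] using
      (isBigO_mul_iff_isBigO_div (.of_forall hne)).mp hlead
  exact tendsto_nhds_unique tendsto_const_nhds (hconst.trans_tendsto hq0)

end QSeries

section Sturm

variable {𝒢 : Subgroup (GL (Fin 2) ℝ)} [𝒢.IsArithmetic] {k : ℤ}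

lemma norm_isBigO_self (F : ModularForm 𝒢 k) :
    (ModularForm.norm 𝒮ℒ F : ℍ → ℂ) =O[atImInfty] F := by
  classical
  let := Fintype.ofFinite (𝒮ℒ ⧸ 𝒢.subgroupOf 𝒮ℒ)
  let e : 𝒮ℒ ⧸ 𝒢.subgroupOf 𝒮ℒ := QuotientGroup.mk 1
  have hself : SlashInvariantForm.quotientFunc F e = F := by simp [e]
  have hothers : (∏ q ∈ Finset.univ.erase e, SlashInvariantForm.quotientFunc F q)
      =O[atImInfty] fun _ ↦ ∏ _q ∈ Finset.univ.erase e, (1 : ℂ) := by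
    rw [Finset.prod_fn]
    refine IsBigO.finsetProd (Quotient.forall.mpr ?_)
    rintro ⟨_, γ, rfl⟩ -
    refine .trans ?_ ((ModularFormClass.bdd_at_infty_slash F γ⁻¹).trans
      (.of_bound 1 (by simp) : _ =O[atImInfty] fun _ ↦ (1 : ℂ)))
    rw [ModularForm.SL_slash, map_inv]
    exact isBigO_refl _ _
  rw [ModularForm.coe_norm, ← Finset.mul_prod_erase Finset.univ _ (Finset.mem_univ e), hself]
  simpa only [Finset.prod_const_one, mul_one] using! (isBigO_refl F atImInfty).mul hothers

theorem exists_sturmBound (𝒢 : Subgroup (GL (Fin 2) ℝ)) [𝒢.IsArithmetic] (k : ℤ) {h : ℕ}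
    (hh : 0 < h) :
    ∃ B : ℕ, ∀ (F : ModularForm 𝒢 k) (c : ℕ → ℂ),
      (∀ τ : ℍ, HasSum (fun n ↦ c n * 𝕢 h τ ^ n) (F τ)) → (∀ n < B, c n = 0) → F = 0 := by
  set K : ℕ := (k * Nat.card (𝒮ℒ ⧸ 𝒢.subgroupOf 𝒮ℒ)).toNat
  refine ⟨h * (K / 12 + 1), fun F c hF hc ↦
    DFunLike.coe_injective ((ModularForm.norm_eq_zero_iff 𝒮ℒ F).mp ?_)⟩
  have hqpow (τ : ℍ) : 𝕢 h τ ^ (h * (K / 12 + 1)) = 𝕢 (1 : ℝ) τ ^ (K / 12 + 1) := by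
    simpa only [one_mul, pow_mul] using congr_arg (· ^ (K / 12 + 1))
      (qParam_mul_natCast_pow 1 hh.ne' τ)
  have hnorm := (norm_isBigO_self F).trans
    (isBigO_qParam_pow_of_coeff_eq_zero (Nat.cast_pos.mpr hh) hF hc)
  simp_rw [hqpow] at hnorm
  refine ModularForm.sturm_bound_levelOne (lt_of_lt_of_le ?_
    (PowerSeries.nat_le_order _ (K / 12 + 1) (coeff_eq_zero_of_isBigO_qParam_pow one_pos
      (ModularForm.hasSum_qExpansion _ one_pos (by simp)) hnorm)))
  exact_mod_cast Nat.lt_succ_self _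

end Sturm

section HeckeSequences

variable {R : Type*} [CommRing R] {Q : ℕ}

/-- The Hecke operator `T_Q` on coefficient sequences, `(T_Q u)(n) = u(Qn) + P u(n/Q)` with
`u(n/Q) = 0` when `Q ∤ n`; in weight `k` one takes `P = Q ^ (k - 1)`. -/
def hecke (Q : ℕ) (P : R) : Module.End R (ℕ → R) where
  toFun u n := u (Q * n) + P * if Q ∣ n then u (n / Q) else 0
  map_add' u v := by ext; dsimp; split_ifs <;> ring
  map_smul' a u := by ext; dsimp; split_ifs <;> ring

lemma hecke_apply (P : R) (u : ℕ → R) (n : ℕ) :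
    hecke Q P u n = u (Q * n) + P * if Q ∣ n then u (n / Q) else 0 := rfl

lemma hecke_apply_of_not_dvd (P : R) (u : ℕ → R) {n : ℕ} (hn : ¬ Q ∣ n) :
    hecke Q P u n = u (Q * n) := by
  simp [hecke_apply, hn]

lemma hecke_apply_mul (hQ : 0 < Q) (P : R) (u : ℕ → R) (n : ℕ) :
    hecke Q P u (Q * n) = u (Q * (Q * n)) + P * u n := by
  simp [hecke_apply, Nat.mul_div_cancel_left n hQ]

/-- The Hecke operators `T_{Q^r}` on coefficient sequences. -/
def heckePow (Q : ℕ) (P : R) : ℕ → Module.End R (ℕ → R)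
  | 0 => 1
  | 1 => hecke Q P
  | r + 2 => hecke Q P * heckePow Q P (r + 1) - P • heckePow Q P r

lemma heckePow_add_two_apply (P : R) (u : ℕ → R) (r : ℕ) :
    heckePow Q P (r + 2) u = hecke Q P (heckePow Q P (r + 1) u) - P • heckePow Q P r u := rfl

lemma heckePow_apply_mul (hQ : 0 < Q) (P : R) (u : ℕ → R) (n r : ℕ) :
    heckePow Q P (r + 1) u (Q * n) - P * heckePow Q P r u n = u (Q ^ (r + 2) * n) := by
  induction r generalizing n with
  | zero => simp [heckePow, hecke_apply_mul hQ, pow_two, mul_assoc]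
  | succ r ih =>
    rw [heckePow_add_two_apply, Pi.sub_apply, hecke_apply_mul hQ, Pi.smul_apply, smul_eq_mul,
      add_sub_right_comm, ih, add_sub_cancel_right, pow_succ _ (r + 2), mul_assoc]

lemma heckePow_apply_of_not_dvd (hQ : 0 < Q) (P : R) (u : ℕ → R) {n : ℕ} (hn : ¬ Q ∣ n) (r : ℕ) :
    heckePow Q P r u n = u (Q ^ r * n) := by
  match r with
  | 0 => simp [heckePow]
  | 1 => simp [heckePow, hecke_apply_of_not_dvd P u hn]
  | r + 2 =>
    rw [heckePow_add_two_apply, Pi.sub_apply, hecke_apply_of_not_dvd _ _ hn, Pi.smul_apply,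
      smul_eq_mul, heckePow_apply_mul hQ]

lemma heckePow_mem (P : R) {L : Submodule R (ℕ → R)} (hL : ∀ u ∈ L, hecke Q P u ∈ L)
    {u : ℕ → R} (hu : u ∈ L) : ∀ r, heckePow Q P r u ∈ L
  | 0 => hu
  | 1 => hL u hu
  | r + 2 => L.sub_mem (hL _ (heckePow_mem P hL hu (r + 1))) (L.smul_mem P (heckePow_mem P hL hu r))

end HeckeSequences

/- The recurrence permutes the finite set of pairs of consecutive terms, so the pair `(t 0, 0)` is
reached again, from a pair of the form `(0, _)`. -/
lemma exists_pos_eq_zero_of_recurrence {V : Type*} [AddCommGroup V] [Finite V] {T : V → V}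
    {P : V →+ V} (hP : Injective P) {t : ℕ → V} (h1 : t 1 = T (t 0))
    (h2 : ∀ r, t (r + 2) = T (t (r + 1)) - P (t r)) : ∃ r, 0 < r ∧ t r = 0 := by
  let Φ : V × V → V × V := fun p ↦ (T p.1 - P p.2, p.1)
  have hΦ : Injective Φ := by
    rintro ⟨u, v⟩ ⟨u', v'⟩ h
    obtain ⟨h, rfl⟩ := Prod.mk.inj h
    exact Prod.ext rfl (hP (sub_right_injective h))
  have horbit (r : ℕ) : Φ^[r + 1] (t 0, 0) = (t (r + 1), t r) := by
    induction r with
    | zero => simp [Φ, h1]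
    | succ r ih => rw [iterate_succ_apply', ih]; simp [Φ, h2]
  obtain ⟨s, hs, hper⟩ := hΦ.mem_periodicPts (t 0, 0)
  refine ⟨2 * s - 1, by lia, ?_⟩
  have hreturn : Φ^[2 * s - 1 + 1] (t 0, 0) = (t 0, 0) := by
    rw [Nat.sub_add_cancel (by lia)]
    exact hper.const_mul 2
  rw [horbit] at hreturn
  exact (Prod.mk.inj hreturn).2

theorem exists_pos_dvd_of_hecke_stable {m Q : ℕ} (hm : 0 < m) (hQ : 0 < Q) {P : ℤ}
    (hP : IsCoprime P m) {L : Submodule ℤ (ℕ → ℤ)} [Module.Finite ℤ L]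
    (hL : ∀ u ∈ L, hecke Q P u ∈ L) {a : ℕ → ℤ} (ha : a ∈ L) :
    ∃ r, 0 < r ∧ ∀ n, ¬ Q ∣ n → (m : ℤ) ∣ a (Q ^ r * n) := by
  have : NeZero m := ⟨hm.ne'⟩
  let N : Submodule ℤ L := Ideal.span {(m : ℤ)} • ⊤
  have : Finite (ℤ ⧸ Ideal.span {(m : ℤ)}) :=
    .of_equiv _ (Int.quotientSpanNatEquivZMod m).symm.toEquiv
  have : Finite (L ⧸ N) := by
    have : Finite (L ⧸ (⊤ : Submodule ℤ L)) := inferInstance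
    exact Submodule.finite_quotient_smul _ Module.Finite.fg_top
  have hmem (x : L) : x ∈ N ↔ ∃ y : L, (m : ℤ) • y = x := by
    simp [N, Submodule.ideal_span_singleton_smul,
      Submodule.mem_smul_pointwise_iff_exists]
  let T : L →ₗ[ℤ] L := (hecke Q P).restrict hL
  have hT : N ≤ N.comap T := fun x hx ↦ by
    obtain ⟨y, rfl⟩ := (hmem x).mp hx
    exact (hmem _).mpr ⟨T y, by simp⟩
  let t (r : ℕ) : L := ⟨heckePow Q P r a, heckePow_mem P hL ha r⟩
  obtain ⟨r, hr, hzero⟩ : ∃ r, 0 < r ∧ N.mkQ (t r) = 0 := by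
    refine exists_pos_eq_zero_of_recurrence (T := N.mapQ N T hT)
      (P := (P • LinearMap.id : L ⧸ N →ₗ[ℤ] L ⧸ N).toAddMonoidHom) ?_ rfl fun r ↦ rfl
    rw [injective_iff_map_eq_zero]
    intro x hx
    obtain ⟨b, c, hbc⟩ := hP
    have hmx : (m : ℤ) • x = 0 := by
      obtain ⟨x, rfl⟩ := N.mkQ_surjective x
      rw [← map_smul]
      exact (Submodule.Quotient.mk_eq_zero N).mpr ((hmem _).mpr ⟨x, rfl⟩)
    have hPx : P • x = 0 := hx
    rw [← one_smul ℤ x, ← hbc, add_smul, mul_smul, mul_smul, hPx, hmx, smul_zero, smul_zero,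
      add_zero]
  obtain ⟨y, hy⟩ := (hmem _).mp ((Submodule.Quotient.mk_eq_zero N).mp hzero)
  refine ⟨r, hr, fun n hn ↦ ⟨(y : ℕ → ℤ) n, ?_⟩⟩
  rw [← heckePow_apply_of_not_dvd hQ P a hn]
  exact (congr_fun (congr_arg Subtype.val hy) n).symm

section DoubleCosets

variable {𝒢 : Subgroup (GL (Fin 2) ℝ)} {k : ℤ}

lemma isBoundedAt_slash_of_mem_range [𝒢.IsArithmetic] (F : ModularForm 𝒢 k) {g : GL (Fin 2) ℝ}
    (hg : g ∈ (Matrix.GeneralLinearGroup.map (Rat.castHom ℝ)).range) {c : OnePoint ℝ}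
    (hc : IsCusp c 𝒢) : c.IsBoundedAt (F ∣[k] g) k := by
  obtain ⟨g, rfl⟩ := hg
  have : (ConjAct.toConjAct (g.map (Rat.castHom ℝ))⁻¹ • 𝒢).IsArithmetic := by
    simpa only [map_inv] using Subgroup.IsArithmetic.conj 𝒢 g⁻¹
  refine (ModularForm.translate F (g.map (Rat.castHom ℝ))).bdd_at_cusps' ?_
  rw [Subgroup.IsArithmetic.isCusp_iff_isCusp_SL2Z] at hc ⊢
  exact hc

variable {ι : Type*} [Fintype ι] {α : ι → GL (Fin 2) ℝ}

lemma sum_slash_invariant {F : ℍ → ℂ} {g : GL (Fin 2) ℝ}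
    (hF : ∀ γ ∈ 𝒢, F ∣[k] γ = F)
    (hex : ∀ i, ∃ j, ∃ γ ∈ 𝒢, α i * g = γ * α j)
    (hinj : ∀ i j, ∀ γ ∈ 𝒢, α i = γ * α j → i = j) :
    (∑ i, F ∣[k] α i) ∣[k] g = ∑ i, F ∣[k] α i := by
  choose p γ hγ hp using hex
  have hp_inj : Injective p := fun i j hij ↦ by
    refine hinj i j (γ i * (γ j)⁻¹) (mul_mem (hγ i) (inv_mem (hγ j))) ?_
    rw [← mul_left_inj g, mul_assoc, mul_assoc, hp i, hp j, hij, inv_mul_cancel_left]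
  calc (∑ i, F ∣[k] α i) ∣[k] g
      = ∑ i, F ∣[k] α (p i) := by
        rw [SlashAction.sum_slash]
        refine Finset.sum_congr rfl fun i _ ↦ ?_
        rw [← SlashAction.slash_mul, hp, SlashAction.slash_mul, hF _ (hγ i)]
    _ = ∑ i, F ∣[k] α i :=
        (Equiv.ofBijective p (Finite.injective_iff_bijective.mp hp_inj)).sum_comp (F ∣[k] α ·)

theorem exists_coe_eq_sum_slash [𝒢.IsArithmetic] (F : ModularForm 𝒢 k)
    (hα : ∀ i, α i ∈ (Matrix.GeneralLinearGroup.map (Rat.castHom ℝ)).range)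
    (hex : ∀ g ∈ 𝒢, ∀ i, ∃ j, ∃ γ ∈ 𝒢, α i * g = γ * α j)
    (hinj : ∀ i j, ∀ γ ∈ 𝒢, α i = γ * α j → i = j) :
    ∃ G : ModularForm 𝒢 k, ⇑G = ∑ i, (F : ℍ → ℂ) ∣[k] α i := by
  refine ⟨⟨⟨∑ i, (F : ℍ → ℂ) ∣[k] α i, fun g hg ↦ ?_⟩, ?_, fun {c} hc ↦ ?_⟩, rfl⟩
  · exact sum_slash_invariant (fun γ hγ ↦ SlashInvariantForm.slash_action_eqn F γ hγ)
      (hex g hg) hinj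
  · change MDiff (∑ i, (F : ℍ → ℂ) ∣[k] α i)
    exact Finset.sum_induction _ (fun f : ℍ → ℂ ↦ MDiff f) (fun _ _ ↦ .add) mdifferentiable_const
      fun i _ ↦ F.holo'.slash k _
  · change c.IsBoundedAt (∑ i, F ∣[k] α i) k
    refine Finset.sum_induction _ (fun f : ℍ → ℂ ↦ c.IsBoundedAt f k) (fun f g ↦ .add) ?_
      fun i _ ↦ isBoundedAt_slash_of_mem_range F (hα i) hc
    exact (0 : ModularForm 𝒢 k).bdd_at_cusps' hc

end DoubleCosets

section HeckeMatrices

/-- Representatives of `Γ(N) \ Γ(N) diag(1, Q) Γ(N)` when `Q` is a prime congruent to `1`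
modulo `N`. -/
def heckeMatrix (N Q : ℕ) : Option (Fin Q) → Matrix (Fin 2) (Fin 2) ℤ
  | none => !![(Q : ℤ), 0; 0, 1]
  | some j => !![1, (N : ℤ) * j; 0, (Q : ℤ)]

variable {N Q : ℕ}

lemma det_heckeMatrix (i : Option (Fin Q)) : (heckeMatrix N Q i).det = Q := by
  cases i <;> simp [heckeMatrix, Matrix.det_fin_two]

lemma heckeMatrix_map_castRingHom (hQN : (Q : ZMod N) = 1) (i : Option (Fin Q)) :
    (heckeMatrix N Q i).map (Int.castRingHom (ZMod N)) = 1 := by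
  ext a b
  cases i <;> fin_cases a <;> fin_cases b <;> simp [heckeMatrix, hQN]

lemma mem_Gamma_iff_map_eq_one {γ : SL(2, ℤ)} :
    γ ∈ Γ(N) ↔ (γ : Matrix (Fin 2) (Fin 2) ℤ).map (Int.castRingHom (ZMod N)) = 1 := by
  rw [CongruenceSubgroup.Gamma_mem', Matrix.SpecialLinearGroup.ext_iff, ← Matrix.ext_iff]
  rfl

lemma exists_mem_Gamma_of_eq_mul {A B M : Matrix (Fin 2) (Fin 2) ℤ} (hdet : A.det = B.det)
    (hB : B.det ≠ 0) (hA1 : A.map (Int.castRingHom (ZMod N)) = 1)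
    (hB1 : B.map (Int.castRingHom (ZMod N)) = 1) (h : A = M * B) :
    ∃ γ ∈ Γ(N), A = (γ : Matrix (Fin 2) (Fin 2) ℤ) * B := by
  refine ⟨⟨M, ?_⟩, mem_Gamma_iff_map_eq_one.mpr ?_, h⟩
  · rw [h, Matrix.det_mul] at hdet
    exact (mul_eq_right₀ hB).mp hdet
  · rwa [h, Matrix.map_mul, hB1, mul_one] at hA1

lemma exists_eq_mul_of_mul_eq_mul {K : Type*} [Field K] {a b c d : K} (h : a * d = b * c)
    (hac : ¬ (a = 0 ∧ c = 0)) : ∃ x, b = a * x ∧ d = c * x := by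
  by_cases ha : a = 0
  · have hc : c ≠ 0 := fun hc ↦ hac ⟨ha, hc⟩
    refine ⟨d / c, ?_, by field_simp⟩
    rw [ha, zero_mul, eq_comm, mul_eq_zero] at h
    simp [ha, h.resolve_right hc]
  · exact ⟨b / a, by field_simp, by field_simp; linear_combination h⟩

section

variable [NeZero Q]

/-- `heckeMatrix` as a family of elements of `GL₂(ℝ)`. -/
noncomputable def heckeRep (N Q : ℕ) [NeZero Q] (i : Option (Fin Q)) : GL (Fin 2) ℝ :=
  .mkOfDetNeZero ((heckeMatrix N Q i).map (Int.castRingHom ℝ)) <| by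
    rw [← RingHom.mapMatrix_apply, ← RingHom.map_det, det_heckeMatrix]
    simpa using NeZero.ne Q

lemma heckeRep_apply (i : Option (Fin Q)) (a b : Fin 2) :
    heckeRep N Q i a b = heckeMatrix N Q i a b := rfl

lemma heckeRep_mem_range (i : Option (Fin Q)) :
    heckeRep N Q i ∈ (Matrix.GeneralLinearGroup.map (Rat.castHom ℝ)).range := by
  refine ⟨.mkOfDetNeZero ((heckeMatrix N Q i).map (Int.castRingHom ℚ)) ?_, ?_⟩
  · rw [← RingHom.mapMatrix_apply, ← RingHom.map_det, det_heckeMatrix]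
    simpa using NeZero.ne Q
  · ext a b
    simp [heckeRep_apply, Matrix.GeneralLinearGroup.mkOfDetNeZero]

lemma heckeRep_mul_eq_iff {i j : Option (Fin Q)} {γ δ : SL(2, ℤ)} :
    heckeRep N Q i * Matrix.SpecialLinearGroup.mapGL ℝ δ =
        Matrix.SpecialLinearGroup.mapGL ℝ γ * heckeRep N Q j ↔
      heckeMatrix N Q i * δ = γ * heckeMatrix N Q j := by
  simp only [Matrix.GeneralLinearGroup.ext_iff, ← Matrix.ext_iff, Matrix.GeneralLinearGroup.coe_mul,
    Matrix.mul_apply, heckeRep_apply, Matrix.SpecialLinearGroup.mapGL_coe_matrix,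
    Matrix.SpecialLinearGroup.map_apply_coe, RingHom.mapMatrix_apply, Matrix.map_apply,
    algebraMap_int_eq, eq_intCast]
  norm_cast

end

variable [Fact Q.Prime]

lemma natCast_ne_zero_of_natCast_eq_one (hQN : (Q : ZMod N) = 1) : (N : ZMod Q) ≠ 0 := by
  have hcop : Q.Coprime N := (ZMod.isUnit_iff_coprime Q N).mp (hQN ▸ isUnit_one)
  rw [Ne, ZMod.natCast_eq_zero_iff]
  exact (Nat.Prime.coprime_iff_not_dvd Fact.out).mp hcop

lemma exists_eq_mul_heckeMatrix (hQN : (Q : ZMod N) = 1) {A : Matrix (Fin 2) (Fin 2) ℤ}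
    (hA : A.det = Q) :
    ∃ i, ∃ M : Matrix (Fin 2) (Fin 2) ℤ, A = M * heckeMatrix N Q i := by
  have hN := natCast_ne_zero_of_natCast_eq_one hQN
  by_cases hcol : ((A 0 0 : ℤ) : ZMod Q) = 0 ∧ ((A 1 0 : ℤ) : ZMod Q) = 0
  · simp_rw [ZMod.intCast_zmod_eq_zero_iff_dvd] at hcol
    obtain ⟨⟨a, ha⟩, ⟨c, hc⟩⟩ := hcol
    refine ⟨none, !![a, A 0 1; c, A 1 1], ?_⟩
    ext i j
    fin_cases i <;> fin_cases j <;> simp [heckeMatrix, Matrix.mul_apply, ha, hc, mul_comm]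
  · have hdet : (A 0 0 : ZMod Q) * (A 1 1 : ℤ) = (A 0 1 : ℤ) * (A 1 0 : ℤ) := by
      have := congr_arg (Int.cast : ℤ → ZMod Q) hA
      rw [Matrix.det_fin_two] at this
      push_cast at this
      rwa [ZMod.natCast_self, sub_eq_zero] at this
    obtain ⟨x, hx0, hx1⟩ := exists_eq_mul_of_mul_eq_mul hdet hcol
    obtain ⟨j, hj⟩ : ∃ j : Fin Q, (N : ZMod Q) * (j : ℕ) = x :=
      ⟨⟨(x / N).val, ZMod.val_lt _⟩, by rw [ZMod.natCast_zmod_val, mul_div_cancel₀ _ hN]⟩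
    have hdvd {u v : ℤ} (huv : (u : ZMod Q) = v * x) : ∃ w, u = v * (N * (j : ℕ)) + Q * w := by
      obtain ⟨w, hw⟩ := (ZMod.intCast_zmod_eq_zero_iff_dvd (u - v * (N * (j : ℕ))) Q).mp (by
        push_cast
        rw [hj, huv, sub_self])
      exact ⟨w, by linear_combination hw⟩
    obtain ⟨b, hb⟩ := hdvd hx0
    obtain ⟨d, hd⟩ := hdvd hx1
    refine ⟨some j, !![A 0 0, b; A 1 0, d], ?_⟩
    ext i j
    fin_cases i <;> fin_cases j <;> simp [heckeMatrix, Matrix.mul_apply]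
    · linear_combination hb
    · linear_combination hd

lemma eq_of_heckeMatrix_eq_mul (hQN : (Q : ZMod N) = 1) {M : Matrix (Fin 2) (Fin 2) ℤ}
    {i j : Option (Fin Q)} (h : heckeMatrix N Q i = M * heckeMatrix N Q j) : i = j := by
  have hQ : ¬ (Q : ℤ) ∣ 1 := by
    exact_mod_cast (Fact.out : Q.Prime).one_lt.ne' ∘ Nat.dvd_one.mp
  have h00 := congr_fun₂ h 0 0
  have h01 := congr_fun₂ h 0 1
  have h11 := congr_fun₂ h 1 1
  have h10 := congr_fun₂ h 1 0
  rcases i with _ | i <;> rcases j with _ | j <;>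
    simp only [heckeMatrix, Matrix.mul_apply, Fin.sum_univ_two, Matrix.cons_val_zero,
      Matrix.cons_val_one, Matrix.of_apply, mul_zero, mul_one, add_zero, zero_add]
      at h00 h01 h10 h11
  · rfl
  · rw [← h10, zero_mul, zero_add] at h11
    exact absurd ⟨M 1 1, by rw [h11, mul_comm]⟩ hQ
  · exact absurd ⟨M 0 0, by rw [h00, mul_comm]⟩ hQ
  · rw [← h00, one_mul] at h01
    have hdvd : ((N : ZMod Q) * ((i : ℕ) : ZMod Q)) = N * ((j : ℕ) : ZMod Q) := by
      simpa using congr_arg (Int.cast : ℤ → ZMod Q) h01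
    have hij := mul_left_cancel₀ (natCast_ne_zero_of_natCast_eq_one hQN) hdvd
    rw [ZMod.natCast_eq_natCast_iff'] at hij
    rw [Nat.mod_eq_of_lt i.2, Nat.mod_eq_of_lt j.2] at hij
    rw [Fin.ext hij]

theorem exists_coe_eq_sum_slash_heckeRep [NeZero N] (hQN : (Q : ZMod N) = 1) {k : ℤ}
    (F : ModularForm Γ(N) k) :
    ∃ G : ModularForm Γ(N) k,
      ⇑G = ∑ i, (F : ℍ → ℂ) ∣[k] heckeRep N Q i := by
  refine exists_coe_eq_sum_slash (α := heckeRep N Q) F heckeRep_mem_range ?_ ?_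
  · rintro _ ⟨δ, hδ, rfl⟩ i
    have hdet : (heckeMatrix N Q i * δ).det = Q := by
      rw [Matrix.det_mul, det_heckeMatrix, δ.det_coe, mul_one]
    obtain ⟨j, M, hM⟩ := exists_eq_mul_heckeMatrix hQN hdet
    obtain ⟨γ, hγ, h⟩ := exists_mem_Gamma_of_eq_mul (hdet.trans (det_heckeMatrix j).symm)
      (by simpa [det_heckeMatrix] using NeZero.ne Q)
      (by rw [Matrix.map_mul, heckeMatrix_map_castRingHom hQN, mem_Gamma_iff_map_eq_one.mp hδ,
        one_mul]) (heckeMatrix_map_castRingHom hQN j) hM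
    exact ⟨j, _, ⟨γ, hγ, rfl⟩, heckeRep_mul_eq_iff.mpr h⟩
  · rintro i j _ ⟨γ, -, rfl⟩ h
    rw [← mul_one (heckeRep N Q i),
      ← map_one (Matrix.SpecialLinearGroup.mapGL (n := Fin 2) (R := ℤ) ℝ)] at h
    refine eq_of_heckeMatrix_eq_mul (M := γ) hQN ?_
    rw [← mul_one (heckeMatrix N Q i)]
    exact heckeRep_mul_eq_iff.mp h

end HeckeMatrices

section Sieve

lemma sum_range_exp_two_pi_I_mul_div {D : ℕ} (hD : D ≠ 0) (n : ℤ) :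
    ∑ j ∈ Finset.range D, cexp (2 * π * I * (n * j / D)) = if (D : ℤ) ∣ n then (D : ℂ) else 0 := by
  have hζ := Complex.isPrimitiveRoot_exp D hD
  have hterm (j : ℕ) : cexp (2 * π * I * (n * j / D)) = (cexp (2 * π * I / D) ^ n) ^ j := by
    rw [← Complex.exp_int_mul, ← Complex.exp_nat_mul]
    ring_nf
  simp_rw [hterm]
  split_ifs with h
  · simp [(hζ.zpow_eq_one_iff_dvd n).mpr h]
  · have hne : cexp (2 * π * I / D) ^ n ≠ 1 := mt (hζ.zpow_eq_one_iff_dvd n).mp h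
    rw [geom_sum_eq hne, ← zpow_natCast, ← zpow_mul, mul_comm n, zpow_mul, zpow_natCast,
      hζ.pow_eq_one, one_zpow, sub_self, zero_div]

/-- The operator `∑ cₙ qₕⁿ ↦ ∑_{D ∣ n} cₙ qₕⁿ` on functions of period `h`, written as an average
over translates. -/
noncomputable def sieve (h : ℝ) (D : ℕ) (f : ℍ → ℂ) (τ : ℍ) : ℂ :=
  (D : ℂ)⁻¹ * ∑ j ∈ Finset.range D, f ((h * j / D : ℝ) +ᵥ τ)

lemma hasSum_sieve {h : ℝ} (hh : h ≠ 0) {D : ℕ} (hD : D ≠ 0) {f : ℍ → ℂ} {c : ℕ → ℂ}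
    (hf : ∀ τ : ℍ, HasSum (fun n ↦ c n * 𝕢 h τ ^ n) (f τ)) (τ : ℍ) :
    HasSum (fun n ↦ (if D ∣ n then c n else 0) * 𝕢 h τ ^ n) (sieve h D f τ) := by
  have hq (n j : ℕ) : 𝕢 h ((h * j / D : ℝ) +ᵥ τ : ℍ) ^ n =
      cexp (2 * π * I * ((n : ℤ) * j / D)) * 𝕢 h τ ^ n := by
    simp only [Periodic.qParam, ← Complex.exp_nat_mul, ← Complex.exp_add, coe_vadd]
    congr 1
    have : (h : ℂ) ≠ 0 := by exact_mod_cast hh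
    push_cast
    field_simp
  have hsum := (hasSum_sum (s := Finset.range D) fun j _ ↦
    hf ((h * j / D : ℝ) +ᵥ τ)).mul_left (D : ℂ)⁻¹
  refine hsum.congr_fun fun n ↦ ?_
  simp_rw [hq, mul_left_comm (c n)]
  rw [← Finset.sum_mul, sum_range_exp_two_pi_I_mul_div hD]
  simp only [Int.natCast_dvd_natCast]
  split_ifs
  · field_simp
  · simp

end Sieve

section HeckeQSeries

variable {N Q : ℕ} [NeZero Q]

lemma hasSum_dilate {c : ℕ → ℂ} {w v : ℂ} (h : HasSum (fun n ↦ c n * (w ^ Q) ^ n) v) :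
    HasSum (fun n ↦ (if Q ∣ n then c (n / Q) else 0) * w ^ n) v := by
  rw [← (mul_right_injective₀ (NeZero.ne Q)).hasSum_iff]
  · refine h.congr_fun fun n ↦ ?_
    simp [Nat.mul_div_cancel_left _ (NeZero.pos Q), pow_mul]
  · intro n hn
    rw [if_neg fun ⟨d, hd⟩ ↦ hn ⟨d, hd.symm⟩, zero_mul]

lemma hasSum_contract {c : ℕ → ℂ} {w v : ℂ}
    (h : HasSum (fun n ↦ (if Q ∣ n then c n else 0) * w ^ n) v) :
    HasSum (fun n ↦ c (Q * n) * (w ^ Q) ^ n) v := by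
  rw [← (mul_right_injective₀ (NeZero.ne Q)).hasSum_iff] at h
  · refine h.congr_fun fun n ↦ ?_
    simp [pow_mul]
  · intro n hn
    rw [if_neg fun ⟨d, hd⟩ ↦ hn ⟨d, hd.symm⟩, zero_mul]

lemma det_heckeRep (i : Option (Fin Q)) :
    (heckeRep N Q i).det.val = Q := by
  rw [Matrix.GeneralLinearGroup.val_det_apply, Matrix.det_fin_two]
  simp only [heckeRep_apply]
  have := det_heckeMatrix (N := N) i
  rw [Matrix.det_fin_two] at this
  exact_mod_cast this

lemma coe_heckeRep_smul (i : Option (Fin Q)) (τ : ℍ) :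
    ((heckeRep N Q i • τ : ℍ) : ℂ) =
      (heckeMatrix N Q i 0 0 * τ + heckeMatrix N Q i 0 1) / heckeMatrix N Q i 1 1 := by
  rw [UpperHalfPlane.coe_smul_of_det_pos (by
    rw [det_heckeRep]; exact_mod_cast NeZero.pos Q)]
  have h10 : heckeMatrix N Q i 1 0 = 0 := by cases i <;> rfl
  simp [num, denom, heckeRep_apply, h10]

lemma slash_heckeRep_apply (k : ℤ) (F : ℍ → ℂ) (i : Option (Fin Q)) (τ : ℍ) :
    (F ∣[k] heckeRep N Q i) τ =
      F (heckeRep N Q i • τ) * Q ^ (k - 1) *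
        (heckeMatrix N Q i 1 1 : ℂ) ^ (-k) := by
  have hQ : (0 : ℝ) < Q := by exact_mod_cast NeZero.pos Q
  have h10 : heckeMatrix N Q i 1 0 = 0 := by cases i <;> rfl
  rw [ModularForm.slash_apply, σ, det_heckeRep, if_pos hQ, abs_of_pos hQ]
  simp [denom, heckeRep_apply, h10]

lemma heckeRep_some_smul (j : Fin Q) (τ : ℍ) :
    heckeRep N Q (some j) • τ =
      (N * (j : ℕ) / Q : ℝ) +ᵥ heckeRep N Q (some 0) • τ := by
  ext1
  rw [coe_vadd, coe_heckeRep_smul, coe_heckeRep_smul]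
  simp [heckeMatrix, add_div, add_comm]

lemma sum_slash_heckeRep_some (k : ℤ) (F : ℍ → ℂ) (τ : ℍ) :
    ∑ j : Fin Q, (F ∣[k] heckeRep N Q (some j)) τ =
      sieve N Q F (heckeRep N Q (some 0) • τ) := by
  have hQ : (Q : ℂ) ≠ 0 := by exact_mod_cast NeZero.ne Q
  have hfactor : (Q : ℂ) ^ (k - 1) * (Q : ℂ) ^ (-k) = (Q : ℂ)⁻¹ := by
    rw [← zpow_add₀ hQ, show k - 1 + -k = -1 by ring, zpow_neg_one]
  have h11 (j : Fin Q) : ((heckeMatrix N Q (some j) 1 1 : ℤ) : ℂ) = Q := by simp [heckeMatrix]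
  rw [sieve, ← Fin.sum_univ_eq_sum_range fun j : ℕ ↦ F ((N * j / Q : ℝ) +ᵥ _ • τ), Finset.mul_sum]
  refine Finset.sum_congr rfl fun j _ ↦ ?_
  rw [slash_heckeRep_apply, h11, heckeRep_some_smul j, mul_assoc, hfactor, mul_comm]

lemma hasSum_sum_slash_heckeRep [NeZero N] {k : ℕ} (hk : 0 < k) {F : ℍ → ℂ} {c : ℕ → ℂ}
    (hF : ∀ τ : ℍ, HasSum (fun n ↦ c n * 𝕢 N τ ^ n) (F τ)) (τ : ℍ) :
    HasSum (fun n ↦ hecke Q ((Q : ℂ) ^ (k - 1)) c n * 𝕢 N τ ^ n)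
      ((∑ i, F ∣[(k : ℤ)] heckeRep N Q i) τ) := by
  have hQ : (Q : ℂ) ≠ 0 := by exact_mod_cast NeZero.ne Q
  have hdilate : HasSum (fun n ↦ (Q : ℂ) ^ (k - 1) * ((if Q ∣ n then c (n / Q) else 0) * 𝕢 N τ ^ n))
      ((F ∣[(k : ℤ)] heckeRep N Q none) τ) := by
    have hq : 𝕢 N (heckeRep N Q none • τ : ℍ) = 𝕢 N τ ^ Q := by
      rw [← qParam_natCast_mul, coe_heckeRep_smul]
      simp [heckeMatrix]
    have := hF (heckeRep N Q none • τ)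
    rw [hq] at this
    convert! (hasSum_dilate this).mul_left ((Q : ℂ) ^ (k - 1)) using 1
    rw [slash_heckeRep_apply, ← Nat.cast_pred hk, zpow_natCast]
    simp [heckeMatrix, mul_comm]
  have hcontract : HasSum (fun n ↦ c (Q * n) * 𝕢 N τ ^ n)
      (∑ j : Fin Q, (F ∣[(k : ℤ)] heckeRep N Q (some j)) τ) := by
    have hq : 𝕢 N (heckeRep N Q (some 0) • τ : ℍ) ^ Q = 𝕢 N τ := by
      rw [← qParam_natCast_mul, coe_heckeRep_smul]
      simp [heckeMatrix, mul_div_cancel₀, hQ]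
    have hN : (N : ℝ) ≠ 0 := by exact_mod_cast NeZero.ne N
    rw [sum_slash_heckeRep_some, ← hq]
    exact hasSum_contract (hasSum_sieve hN (NeZero.ne Q) hF _)
  rw [Finset.sum_apply, Fintype.sum_option, add_comm]
  convert! hcontract.add hdilate using 1
  ext n
  rw [hecke_apply]
  ring

end HeckeQSeries

section IntegralForms

/-- The lattice of integer sequences that are coefficients of `q_h`-expansions of modular forms
of weight `k` for `𝒢`. -/
def integralForms (𝒢 : Subgroup (GL (Fin 2) ℝ)) (k : ℤ) (h : ℝ) [𝒢.HasDetPlusMinusOne] :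
    Submodule ℤ (ℕ → ℤ) where
  carrier := {u | ∃ F : ModularForm 𝒢 k, ∀ τ : ℍ, HasSum (fun n ↦ (u n : ℂ) * 𝕢 h τ ^ n) (F τ)}
  add_mem' := by
    rintro u v ⟨F, hF⟩ ⟨G, hG⟩
    exact ⟨F + G, fun τ ↦ ((hF τ).add (hG τ)).congr_fun fun n ↦ by simp [add_mul]⟩
  zero_mem' := ⟨0, fun τ ↦ by simp⟩
  smul_mem' := by
    rintro a u ⟨F, hF⟩
    exact ⟨a • F, fun τ ↦ ((hF τ).const_smul a).congr_fun fun n ↦ by simp [mul_assoc]⟩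

variable {k : ℤ}

instance (𝒢 : Subgroup (GL (Fin 2) ℝ)) [𝒢.IsArithmetic] (h : ℕ) [NeZero h] :
    Module.Finite ℤ (integralForms 𝒢 k h) := by
  have hh : (0 : ℝ) < h := by exact_mod_cast NeZero.pos h
  obtain ⟨B, hB⟩ := exists_sturmBound 𝒢 k (NeZero.pos h)
  let firstCoeffs : integralForms 𝒢 k h →ₗ[ℤ] Fin B → ℤ :=
    (LinearMap.funLeft ℤ ℤ ((↑) : Fin B → ℕ)).comp (integralForms 𝒢 k h).subtype
  refine Module.Finite.of_injective firstCoeffs ((injective_iff_map_eq_zero _).mpr ?_)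
  rintro ⟨u, F, hF⟩ hu
  have hF0 : F = 0 := hB F _ hF fun n hn ↦ by exact_mod_cast congr_fun hu ⟨n, hn⟩
  ext n
  have := coeff_eq_zero_of_isBigO_qParam_pow (B := n + 1) hh hF
    (by rw [hF0]; exact isBigO_zero _ _) n n.lt_succ_self
  exact_mod_cast this

theorem hecke_mem_integralForms {N Q k : ℕ} [NeZero N] [Fact Q.Prime] (hQN : (Q : ZMod N) = 1)
    (hk : 0 < k) {u : ℕ → ℤ} (hu : u ∈ integralForms Γ(N) k N) :
    hecke Q ((Q : ℤ) ^ (k - 1)) u ∈ integralForms Γ(N) k N := by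
  obtain ⟨F, hF⟩ := hu
  obtain ⟨G, hG⟩ := exists_coe_eq_sum_slash_heckeRep hQN F
  refine ⟨G, fun τ ↦ ?_⟩
  rw [hG]
  refine (hasSum_sum_slash_heckeRep hk hF τ).congr_fun fun n ↦ ?_
  simp only [hecke_apply]
  push_cast
  split_ifs <;> simp

theorem exists_pos_dvd_of_mem_integralForms {N m Q k : ℕ} [NeZero N] [Fact Q.Prime] (hm : 0 < m)
    (hk : 0 < k) (hmQ : Q.Coprime m) (hQN : (Q : ZMod N) = 1) {a : ℕ → ℤ}
    (ha : a ∈ integralForms Γ(N) k N) :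
    ∃ r, 0 < r ∧ ∀ n, ¬ Q ∣ n → (m : ℤ) ∣ a (Q ^ r * n) :=
  exists_pos_dvd_of_hecke_stable hm (NeZero.pos Q) (Nat.isCoprime_iff_coprime.mpr hmQ).pow_left
    (fun _ ↦ hecke_mem_integralForms hQN hk) ha

end IntegralForms

section GammaZeroFour

open ModularGroup

/-- The matrix `[1, 0; 4, 1]`, which together with `-1` and `T` generates `Γ₀(4)`. -/
def lowerFour : SL(2, ℤ) := ⟨!![1, 0; 4, 1], by simp⟩

lemma coe_lowerFour : (lowerFour : Matrix (Fin 2) (Fin 2) ℤ) = !![1, 0; 4, 1] := rfl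

lemma coe_lowerFour_inv :
    ((lowerFour⁻¹ : SL(2, ℤ)) : Matrix (Fin 2) (Fin 2) ℤ) = !![1, 0; -4, 1] := by
  simp [Matrix.SpecialLinearGroup.coe_inv, coe_lowerFour, Matrix.adjugate_fin_two_of]

lemma eq_T_zpow_or_eq_neg_T_zpow {γ : SL(2, ℤ)} (hγ : γ 1 0 = 0) :
    ∃ n : ℤ, γ = T ^ n ∨ γ = -T ^ n := by
  have hdet := γ.det_coe
  rw [Matrix.det_fin_two, hγ, mul_zero, sub_zero] at hdet
  obtain ⟨ha, hd⟩ | ⟨ha, hd⟩ := Int.eq_one_or_neg_one_of_mul_eq_one' hdet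
  · refine ⟨γ 0 1, .inl ?_⟩
    ext i j
    fin_cases i <;> fin_cases j <;> simp [coe_T_zpow, ha, hd, hγ]
  · refine ⟨-γ 0 1, .inr ?_⟩
    ext i j
    fin_cases i <;> fin_cases j <;> simp [coe_T_zpow, ha, hd, hγ]

lemma mem_Gamma0_iff_dvd {N : ℕ} {γ : SL(2, ℤ)} : γ ∈ Gamma0 N ↔ (N : ℤ) ∣ γ 1 0 := by
  rw [Gamma0_mem, ZMod.intCast_zmod_eq_zero_iff_dvd]

lemma odd_diag_of_four_dvd {γ : SL(2, ℤ)} (hγ : 4 ∣ γ 1 0) :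
    Odd (γ 0 0) ∧ Odd (γ 1 1) := by
  have hdet := γ.det_coe
  rw [Matrix.det_fin_two] at hdet
  rw [← Int.odd_mul, sub_eq_iff_eq_add.mp hdet]
  exact odd_one.add_even ((even_iff_two_dvd.mpr (by omega)).mul_left _)

/- Euclid's algorithm on the bottom row: right multiplication by `T ^ ± 1` adds `± c` to `d`, and
right multiplication by `lowerFour ^ ± 1` adds `± 4 d` to `c`; since `4 ∣ c` and `d` is odd, one of
these moves shrinks the row until `c = 0`. -/
lemma mem_closure_of_four_dvd {γ : SL(2, ℤ)} (hγ : 4 ∣ γ 1 0) :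
    γ ∈ Subgroup.closure {-1, T, lowerFour} := by
  set G := Subgroup.closure {-1, T, lowerFour}
  have neg_one_mem : -1 ∈ G := Subgroup.subset_closure (by simp)
  have T_mem : T ∈ G := Subgroup.subset_closure (by simp)
  have lower_mem : lowerFour ∈ G := Subgroup.subset_closure (by simp)
  induction hn : (γ 1 0).natAbs + (γ 1 1).natAbs using Nat.strong_induction_on
    generalizing γ with
  | _ n ih =>
    subst hn
    have of_mul {g : SL(2, ℤ)} (hg : g ∈ G) {c d : ℤ} (hc : (γ * g) 1 0 = c)
        (hd : (γ * g) 1 1 = d) (h4 : 4 ∣ c)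
        (hlt : c.natAbs + d.natAbs < (γ 1 0).natAbs + (γ 1 1).natAbs) : γ ∈ G :=
      (G.mul_mem_cancel_right hg).mp (ih _ (by rwa [hc, hd]) (hc ▸ h4) rfl)
    rcases eq_or_ne (γ 1 0) 0 with hc0 | hc0
    · obtain ⟨n, hn | hn⟩ := eq_T_zpow_or_eq_neg_T_zpow hc0
      · exact hn ▸ zpow_mem T_mem n
      · rw [hn, ← neg_one_mul]
        exact mul_mem neg_one_mem (zpow_mem T_mem n)
    rcases lt_or_ge (γ 1 0).natAbs (2 * (γ 1 1).natAbs) with hlt | hge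
    · obtain h | h : (γ 1 1 + γ 1 0).natAbs < (γ 1 1).natAbs ∨
          (γ 1 1 - γ 1 0).natAbs < (γ 1 1).natAbs := by omega
      · refine of_mul T_mem (c := γ 1 0) (d := γ 1 1 + γ 1 0) ?_ ?_ hγ (by omega) <;>
          simp [coe_T, Matrix.mul_apply, add_comm]
      · refine of_mul (inv_mem T_mem) (c := γ 1 0) (d := γ 1 1 - γ 1 0) ?_ ?_ hγ (by omega) <;>
          simp [coe_T_inv, -Matrix.SpecialLinearGroup.coe_inv, Matrix.mul_apply, sub_eq_neg_add]
    · have hd := Int.odd_iff.mp (odd_diag_of_four_dvd hγ).2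
      obtain h | h : (γ 1 0 + 4 * γ 1 1).natAbs < (γ 1 0).natAbs ∨
          (γ 1 0 - 4 * γ 1 1).natAbs < (γ 1 0).natAbs := by omega
      · refine of_mul lower_mem (c := γ 1 0 + 4 * γ 1 1) (d := γ 1 1) ?_ ?_
          (by omega) (by omega) <;>
          simp [coe_lowerFour, Matrix.mul_apply, mul_comm]
      · refine of_mul (inv_mem lower_mem) (c := γ 1 0 - 4 * γ 1 1) (d := γ 1 1) ?_ ?_
          (by omega) (by omega) <;>
          simp [coe_lowerFour_inv, -Matrix.SpecialLinearGroup.coe_inv, Matrix.mul_apply, mul_comm,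
            sub_eq_add_neg]

/-- The exponent, in units of `1 / 8`, of the multiplier of `η (4 τ) / η τ` at a matrix
`[a, b; c, d]` in `Γ₀(4)`. -/
def multiplierExponent (γ : SL(2, ℤ)) : ZMod 8 :=
  (γ 1 1 * (γ 0 1 + γ 1 0 / 4) : ℤ)

lemma multiplierExponent_neg {γ : SL(2, ℤ)} (hγ : 4 ∣ γ 1 0) :
    multiplierExponent (-γ) = multiplierExponent γ := by
  simp only [multiplierExponent, Matrix.SpecialLinearGroup.coe_neg, Matrix.neg_apply,
    Int.neg_ediv_of_dvd hγ]
  congr 1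
  ring

lemma multiplierExponent_mul_T {γ : SL(2, ℤ)} (hγ : 4 ∣ γ 1 0) :
    multiplierExponent (γ * T) = multiplierExponent γ + 1 := by
  obtain ⟨c, hc⟩ := id hγ
  obtain ⟨a, ha⟩ := (odd_diag_of_four_dvd hγ).1
  have hdet : ((γ 0 0 * γ 1 1 - γ 0 1 * γ 1 0 : ℤ) : ZMod 8) = (1 : ℤ) := by
    rw [← Matrix.det_fin_two, γ.det_coe]
  have hparity : ∀ a c : ZMod 8, 4 * (c * (c + (2 * a + 1))) = 0 := by decide
  have h8 : (8 : ZMod 8) = 0 := rfl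
  simp only [hc, ha] at hdet
  push_cast at hdet
  have hmul : multiplierExponent (γ * T) = (4 * c + γ 1 1) * (2 * a + 1 + γ 0 1 + c) := by
    simp [multiplierExponent, coe_T, Matrix.mul_apply, hc, ha]
  have hγ' : multiplierExponent γ = γ 1 1 * (γ 0 1 + c) := by
    simp [multiplierExponent, hc]
  rw [hmul, hγ']
  linear_combination hdet + hparity a c + (γ 0 1 * c) * h8

lemma multiplierExponent_mul_lowerFour {γ : SL(2, ℤ)} (hγ : 4 ∣ γ 1 0) :
    multiplierExponent (γ * lowerFour) = multiplierExponent γ + 1 := by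
  obtain ⟨c, hc⟩ := id hγ
  obtain ⟨d, hd⟩ := (odd_diag_of_four_dvd hγ).2
  have hsq : ∀ d : ZMod 8, (2 * d + 1) * (2 * d + 1) = 1 := by decide
  have : (4 * c + (2 * d + 1) * 4) / 4 = c + (2 * d + 1) := by omega
  have hmul : multiplierExponent (γ * lowerFour) =
      (2 * d + 1) * (γ 0 1 + (c + (2 * d + 1))) := by
    simp [multiplierExponent, coe_lowerFour, Matrix.mul_apply, hc, hd, this]
  have hγ' : multiplierExponent γ = (2 * d + 1) * (γ 0 1 + c) := by
    simp [multiplierExponent, hc, hd]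
  rw [hmul, hγ']
  linear_combination hsq d

end GammaZeroFour

section EtaQuotient

open ModularGroup

lemma eta_add_intCast (z : ℂ) (n : ℤ) :
    η (z + n) = cexp (2 * π * I * n / 24) * η z := by
  have hq (i : ℕ) : eta_q i (z + n) = eta_q i z := by
    rw [eta_q_eq_pow, eta_q_eq_pow]
    congr 1
    rw [Complex.exp_eq_exp_iff_exists_int]
    exact ⟨n, by ring⟩
  simp only [ModularForm.eta, hq, ← mul_assoc, Periodic.qParam, ← Complex.exp_add]
  congr 2
  push_cast
  ring

lemma eta_neg_one_div {z : ℂ} (hz : 0 < z.im) : η (-1 / z) = (sqrt I)⁻¹ * (sqrt z * η z) := by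
  simpa using eta_comp_eq_csqrt_I_inv hz

lemma neg_one_div_im_pos {z : ℂ} (hz : 0 < z.im) : 0 < (-1 / z).im := by
  rw [neg_div, one_div, ← inv_neg]
  exact (UpperHalfPlane.mk z hz).im_inv_neg_coe_pos

/- `z / (k z + 1)` is reached from `z` by inverting, translating by `-k` and inverting again. -/
lemma eta_div_mul_add_one {z : ℂ} (hz : 0 < z.im) (k : ℤ) :
    η (z / (k * z + 1)) = (sqrt I)⁻¹ ^ 2 * sqrt (-1 / z - k) * sqrt z *
      cexp (-2 * π * I * k / 24) * η z := by
  have hz0 : z ≠ 0 := by rintro rfl; simp at hz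
  have hw : 0 < (-1 / z - k).im := by simpa using neg_one_div_im_pos hz
  have hz' : z / (k * z + 1) = -1 / (-1 / z - k) := by
    have : (-1 / z - k : ℂ) = -(k * z + 1) / z := by field_simp; ring
    rw [this, div_div_eq_mul_div, neg_one_mul, neg_div_neg_eq]
  have hshift := eta_add_intCast (-1 / z) (-k)
  rw [Int.cast_neg, ← sub_eq_add_neg, eta_neg_one_div hz] at hshift
  rw [hz', eta_neg_one_div hw, hshift]
  ring_nf

lemma sqrt_ne_zero {z : ℂ} (hz : z ≠ 0) : sqrt z ≠ 0 := by
  rw [sqrt_eq_exp hz]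
  exact Complex.exp_ne_zero _

lemma sqrt_four_mul {z : ℂ} (hz : z ≠ 0) : sqrt (4 * z) = 2 * sqrt z := by
  have hlog : Complex.log (4 * z) = 2 * Real.log 2 + Complex.log z := by
    have h := Complex.log_ofReal_mul (r := 2 ^ 2) (by norm_num) hz
    rw [Real.log_pow] at h
    push_cast at h
    norm_num at h ⊢
    exact h
  rw [sqrt_eq_exp hz, sqrt_eq_exp (by simpa using hz), hlog, add_div, Complex.exp_add,
    mul_div_cancel_left₀ _ two_ne_zero, ← Complex.ofReal_exp, Real.exp_log two_pos,
    Complex.ofReal_ofNat]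

/-- The eta quotient `η (4 τ) / η τ`, which is `∑ b₄(n) q ^ (n + 1 / 8)`. -/
noncomputable def etaQuotient (τ : ℍ) : ℂ := η (4 * τ) / η τ

lemma etaQuotient_vadd (τ : ℍ) (n : ℤ) :
    etaQuotient ((n : ℝ) +ᵥ τ) = ZMod.stdAddChar (n : ZMod 8) * etaQuotient τ := by
  have h4 : (4 * (τ + n) : ℂ) = 4 * τ + (4 * n : ℤ) := by push_cast; ring
  rw [etaQuotient, etaQuotient, coe_vadd, ofReal_intCast, add_comm, h4, eta_add_intCast,
    eta_add_intCast, mul_div_mul_comm, ← Complex.exp_sub, ZMod.stdAddChar_coe]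
  congr 2
  push_cast
  ring

lemma etaQuotient_lowerFour_smul (τ : ℍ) :
    etaQuotient (lowerFour • τ) = ZMod.stdAddChar (1 : ZMod 8) * etaQuotient τ := by
  have hτ : (lowerFour • τ : ℍ) = (τ / ((4 : ℤ) * τ + 1) : ℂ) := by
    rw [coe_specialLinearGroup_apply]
    simp [coe_lowerFour]
  have hτ' : (4 * (τ / ((4 : ℤ) * τ + 1)) : ℂ) = 4 * τ / ((1 : ℤ) * (4 * τ) + 1) := by
    push_cast; ring
  have h4 : (0 : ℝ) < (4 * τ : ℂ).im := by simpa using τ.im_pos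
  have hv : (-1 / (4 * τ) - 1 : ℂ) ≠ 0 := fun h ↦ by
    simpa [sub_eq_zero.mp h] using neg_one_div_im_pos h4
  have hsqrt : sqrt (-1 / (4 * τ) - 1) * sqrt (4 * τ) = sqrt (-1 / τ - 4) * sqrt τ := by
    have : (-1 / τ - 4 : ℂ) = 4 * (-1 / (4 * τ) - 1) := by field_simp
    rw [this, sqrt_four_mul hv, sqrt_four_mul τ.ne_zero]
    ring
  rw [etaQuotient, etaQuotient, hτ, hτ', eta_div_mul_add_one h4, eta_div_mul_add_one τ.im_pos,
    Int.cast_one, Int.cast_ofNat, mul_assoc ((sqrt I)⁻¹ ^ 2), hsqrt]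
  have hexp : cexp (-2 * π * I * 1 / 24) =
      ZMod.stdAddChar (1 : ZMod 8) * cexp (-2 * π * I * 4 / 24) := by
    rw [← Int.cast_one (R := ZMod 8), ZMod.stdAddChar_coe, ← Complex.exp_add]
    congr 1
    push_cast
    ring
  have hI := sqrt_ne_zero I_ne_zero
  have hw := sqrt_ne_zero (z := -1 / τ - 4) fun h ↦ by
    simpa [sub_eq_zero.mp h] using neg_one_div_im_pos τ.im_pos
  have hτ0 := sqrt_ne_zero τ.ne_zero
  have hη := eta_ne_zero τ.im_pos
  rw [hexp, mul_comm (ZMod.stdAddChar 1), ← mul_assoc, mul_assoc _ _ (η _), mul_assoc _ (sqrt τ)]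
  rw [div_eq_iff (by simp [hI, hw, hτ0, hη])]
  field_simp

lemma etaQuotient_smul_iff_of_mul {γ g : SL(2, ℤ)} {e : ZMod 8}
    (hg : ∀ τ, etaQuotient (g • τ) = ZMod.stdAddChar e * etaQuotient τ)
    (he : multiplierExponent (γ * g) = multiplierExponent γ + e) :
    (∀ τ, etaQuotient ((γ * g) • τ) =
      ZMod.stdAddChar (multiplierExponent (γ * g)) * etaQuotient τ) ↔
    ∀ τ, etaQuotient (γ • τ) = ZMod.stdAddChar (multiplierExponent γ) * etaQuotient τ := by
  simp only [he, AddChar.map_add_eq_mul, mul_assoc, ← hg, mul_smul]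
  refine ⟨fun h τ ↦ ?_, fun h τ ↦ h (g • τ)⟩
  simpa using h (g⁻¹ • τ)

lemma etaQuotient_smul {γ : SL(2, ℤ)} (hγ : 4 ∣ γ 1 0) (τ : ℍ) :
    etaQuotient (γ • τ) = ZMod.stdAddChar (multiplierExponent γ) * etaQuotient τ := by
  suffices γ ∈ Gamma0 4 ∧ ∀ τ : ℍ,
      etaQuotient (γ • τ) = ZMod.stdAddChar (multiplierExponent γ) * etaQuotient τ from this.2 τ
  have generator (g : SL(2, ℤ)) (hg : g ∈ ({-1, T, lowerFour} : Set SL(2, ℤ))) :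
      g ∈ Gamma0 4 ∧ ∃ e : ZMod 8,
        (∀ γ : SL(2, ℤ), 4 ∣ γ 1 0 → multiplierExponent (γ * g) = multiplierExponent γ + e) ∧
        ∀ τ, etaQuotient (g • τ) = ZMod.stdAddChar e * etaQuotient τ := by
    rcases hg with rfl | rfl | rfl
    · exact ⟨by simp [Gamma0_mem], 0, fun γ h ↦ by simp [multiplierExponent_neg h], by simp⟩
    · exact ⟨by simp [Gamma0_mem, coe_T], 1, fun γ h ↦ multiplierExponent_mul_T h,
        fun τ ↦ by rw [modular_T_smul]; simpa using etaQuotient_vadd τ 1⟩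
    · exact ⟨mem_Gamma0_iff_dvd.mpr (by simp [coe_lowerFour]), 1,
        fun γ h ↦ multiplierExponent_mul_lowerFour h, etaQuotient_lowerFour_smul⟩
  have hmem := mem_closure_of_four_dvd hγ
  clear hγ
  induction hmem using Subgroup.closure_induction_right with
  | one => exact ⟨one_mem _, by simp [multiplierExponent]⟩
  | mul_right γ _ g hg h =>
    obtain ⟨hg0, e, he, hge⟩ := generator g hg
    exact ⟨mul_mem h.1 hg0,
      (etaQuotient_smul_iff_of_mul hge (he γ (mem_Gamma0_iff_dvd.mp h.1))).mpr h.2⟩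
  | mul_inv_cancel γ _ g hg h =>
    obtain ⟨hg0, e, he, hge⟩ := generator g hg
    have hγg := mul_mem h.1 (inv_mem hg0)
    refine ⟨hγg, (etaQuotient_smul_iff_of_mul hge (he _ (mem_Gamma0_iff_dvd.mp hγg))).mp ?_⟩
    simpa only [inv_mul_cancel_right] using h.2

lemma etaQuotient_smul_of_mem_Gamma {γ : SL(2, ℤ)} (hγ : γ ∈ Γ(32)) (τ : ℍ) :
    etaQuotient (γ • τ) = etaQuotient τ := by
  obtain ⟨-, hb, hc, -⟩ := Gamma_mem.mp hγ
  rw [ZMod.intCast_zmod_eq_zero_iff_dvd] at hb hc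
  obtain ⟨b, hb⟩ := hb
  obtain ⟨c, hc⟩ := hc
  have h8 : multiplierExponent γ = 0 := by
    rw [multiplierExponent, ZMod.intCast_zmod_eq_zero_iff_dvd]
    exact Dvd.dvd.mul_left (by omega) _
  rw [etaQuotient_smul (by omega), h8, AddChar.map_zero_eq_one, one_mul]

end EtaQuotient

section DiscriminantGrowth

lemma tendsto_atImInfty_of_im_eq {φ : ℍ → ℍ} {r : ℝ} (hr : 0 < r)
    (h : ∀ τ, (φ τ).im = r * τ.im) : Tendsto φ atImInfty atImInfty :=
  tendsto_comap_iff.mpr <| (tendsto_comap.const_mul_atTop hr).congr fun τ ↦ (h τ).symm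

lemma norm_slash_mul_im_pow (f : ℍ → ℂ) (k : ℕ) (γ : SL(2, ℤ)) (τ : ℍ) :
    ‖(f ∣[(2 * k : ℤ)] γ) τ‖ * τ.im ^ k = ‖f (γ • τ)‖ * (γ • τ).im ^ k := by
  have h := congr_arg norm (petersson_slash_SL (2 * k) f f γ τ)
  have hnorm (g : ℍ → ℂ) (σ : ℍ) : ‖petersson (2 * k) g g σ‖ = (‖g σ‖ * σ.im ^ k) ^ 2 := by
    rw [petersson, norm_mul, norm_mul, RCLike.norm_conj, norm_zpow, norm_real,
      Real.norm_of_nonneg σ.im_pos.le]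
    norm_cast
    ring
  have him (σ : ℍ) : 0 ≤ σ.im ^ k := pow_nonneg σ.im_pos.le k
  rw [hnorm, hnorm] at h
  exact (sq_eq_sq₀ (mul_nonneg (norm_nonneg _) (him τ)) (mul_nonneg (norm_nonneg _) (him _))).mp h

/-- The `SL(2, ℤ)`-invariant size `|Δ(τ)| (Im τ)⁶` of the discriminant. Its behaviour under any
integral matrix is explicit, which is what bounds eta quotients at all cusps. -/
noncomputable def deltaNorm (τ : ℍ) : ℝ := ‖discriminant τ‖ * τ.im ^ 6

lemma deltaNorm_smul (γ : SL(2, ℤ)) (τ : ℍ) : deltaNorm (γ • τ) = deltaNorm τ := by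
  have hΔ : discriminant ∣[(2 * (6 : ℕ) : ℤ)] γ = discriminant :=
    CuspForm.discriminant.slash_action_eq' _ ⟨γ, rfl⟩
  rw [deltaNorm, ← norm_slash_mul_im_pow, hΔ, deltaNorm]

lemma isTheta_deltaNorm :
    deltaNorm =Θ[atImInfty] fun τ ↦ Real.exp (-2 * π * τ.im) * τ.im ^ 6 := by
  have hΔ : discriminant =Θ[atImInfty] fun τ ↦ Real.exp (-2 * π * τ.im) := by
    refine ⟨?_, exp_isBigO_discriminant⟩
    simpa only [div_one] using! CuspFormClass.exp_decay_atImInfty (h := 1) CuspForm.discriminant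
      one_pos one_mem_strictPeriods_SL
  exact hΔ.norm_left.mul (isTheta_refl _ _)

lemma isTheta_deltaNorm_comp_of_im_eq {φ : ℍ → ℍ} {r : ℝ} (hr : 0 < r)
    (h : ∀ τ, (φ τ).im = r * τ.im) :
    (deltaNorm ∘ φ) =Θ[atImInfty] fun τ ↦ Real.exp (-2 * π * (r * τ.im)) * τ.im ^ 6 := by
  have hφ := tendsto_atImInfty_of_im_eq hr h
  refine IsTheta.trans ⟨isTheta_deltaNorm.1.comp_tendsto hφ,
    isTheta_deltaNorm.2.comp_tendsto hφ⟩ ?_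
  simp only [comp_def, h, mul_pow, mul_left_comm _ (r ^ 6)]
  exact (isTheta_const_mul_left (pow_ne_zero 6 hr.ne')).mpr (isTheta_refl _ _)

lemma exists_eq_mul_upperTriangular {M : Matrix (Fin 2) (Fin 2) ℤ} (hM : M.det ≠ 0) :
    ∃ (σ : SL(2, ℤ)) (B D : ℤ), M = σ * !![(Int.gcd (M 0 0) (M 1 0) : ℤ), B; 0, D] := by
  have hg : Int.gcd (M 0 0) (M 1 0) ≠ 0 := fun h ↦ by
    obtain ⟨h₀, h₁⟩ := Int.gcd_eq_zero_iff.mp h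
    exact hM (by rw [Matrix.det_fin_two, h₀, h₁]; ring)
  obtain ⟨a, c, hac, ha, hc⟩ := Int.exists_gcd_one (Nat.pos_of_ne_zero hg)
  obtain ⟨σ, hσa, hσc⟩ := (Int.isCoprime_iff_gcd_eq_one.mpr hac).exists_SL2_col 0
  have hσ : σ 0 0 * σ 1 1 - σ 0 1 * σ 1 0 = 1 := by rw [← Matrix.det_fin_two, σ.det_coe]
  refine ⟨σ, σ 1 1 * M 0 1 - σ 0 1 * M 1 1, σ 0 0 * M 1 1 - σ 1 0 * M 0 1, ?_⟩
  ext i j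
  fin_cases i <;> fin_cases j <;> simp only [Fin.zero_eta, Fin.mk_one, Matrix.mul_apply,
    Fin.sum_univ_two, Matrix.of_apply, Matrix.cons_val', Matrix.cons_val_zero,
    Matrix.cons_val_one, mul_zero, add_zero, Fin.isValue]
  · rw [hσa, ← ha]
  · linear_combination -M 0 1 * hσ
  · rw [hσc, ← hc]
  · linear_combination -M 1 1 * hσ

lemma isTheta_deltaNorm_comp {M : Matrix (Fin 2) (Fin 2) ℤ} (hM : 0 < M.det) {φ : ℍ → ℍ}
    (hφ : ∀ τ, (φ τ : ℂ) = (M 0 0 * τ + M 0 1) / (M 1 0 * τ + M 1 1)) :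
    (deltaNorm ∘ φ) =Θ[atImInfty] fun τ ↦
      Real.exp (-2 * π * (Int.gcd (M 0 0) (M 1 0) ^ 2 / M.det * τ.im)) * τ.im ^ 6 := by
  obtain ⟨σ, B, D, h⟩ := exists_eq_mul_upperTriangular hM.ne'
  set A : ℤ := (Int.gcd (M 0 0) (M 1 0) : ℤ)
  have hdet : M.det = A * D := by
    rw [h, Matrix.det_mul, σ.det_coe, Matrix.det_fin_two_of]
    ring
  have hA0 : 0 < A := lt_of_le_of_ne (Int.natCast_nonneg _) fun h0 ↦ by
    simp [hdet, ← h0] at hM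
  have hD0 : 0 < D := pos_of_mul_pos_right (hdet ▸ hM) hA0.le
  have hAD : 0 < (A / D : ℝ) := by positivity
  let ψ (τ : ℍ) : ℍ := (B / D : ℝ) +ᵥ (⟨A / D, hAD⟩ : {x : ℝ // 0 < x}) • τ
  have hψ (τ : ℍ) : (ψ τ).im = A / D * τ.im := by simp [ψ]
  have hD : (D : ℂ) ≠ 0 := by exact_mod_cast hD0.ne'
  have hψ_coe (τ : ℍ) : (ψ τ : ℂ) = (A * τ + B) / D := by
    simp only [ψ, coe_vadd, coe_pos_real_smul, real_smul]
    push_cast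
    field_simp
    ring
  have hφψ (τ : ℍ) : φ τ = σ • ψ τ := by
    ext
    rw [hφ, coe_specialLinearGroup_apply, h, hψ_coe, ← div_div_div_cancel_right₀ hD]
    simp only [Matrix.mul_apply, Fin.sum_univ_two, Matrix.of_apply, Matrix.cons_val',
      Matrix.cons_val_zero, Matrix.cons_val_one, mul_zero, add_zero, algebraMap_int_eq,
      eq_intCast, ofReal_intCast]
    push_cast
    congr 1 <;> field_simp <;> ring
  have hcomp : deltaNorm ∘ φ = deltaNorm ∘ ψ := funext fun τ ↦ by
    rw [comp_apply, hφψ, deltaNorm_smul, comp_apply]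
  have hratio : (Int.gcd (M 0 0) (M 1 0) ^ 2 / M.det : ℝ) = A / D := by
    have hgcd : (Int.gcd (M 0 0) (M 1 0) : ℝ) = A := by simp [A]
    rw [hdet, hgcd]
    push_cast
    field_simp
  rw [hcomp, hratio]
  exact isTheta_deltaNorm_comp_of_im_eq hAD hψ

end DiscriminantGrowth

section SieveInvariance

lemma smul_eq_of_map_castRingHom_eq {α : Type*} {N : ℕ} {f : ℍ → α}
    (hf : ∀ γ ∈ Γ(N), ∀ τ, f (γ • τ) = f τ) {γ γ' : SL(2, ℤ)}
    (h : Matrix.SpecialLinearGroup.map (Int.castRingHom (ZMod N)) γ' =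
      Matrix.SpecialLinearGroup.map (Int.castRingHom (ZMod N)) γ) (τ : ℍ) :
    f (γ' • τ) = f (γ • τ) := by
  have hmem : γ' * γ⁻¹ ∈ Γ(N) := by
    rw [Gamma_mem', map_mul, map_inv, h, mul_inv_cancel]
  rw [← hf _ hmem (γ • τ), smul_smul, inv_mul_cancel_right]

lemma vadd_smul_eq_smul_vadd {α : Type*} {h m : ℕ} (hm : m ≠ 0) {f : ℍ → α}
    (hf : ∀ γ ∈ Γ(h), ∀ τ, f (γ • τ) = f τ) {γ : SL(2, ℤ)} (hγ : (m : ℤ) ^ 2 ∣ γ 1 0) {i j : ℤ}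
    (hij : (m : ℤ) ∣ i * γ 1 1 - j * γ 0 0) (τ : ℍ) :
    f ((h * i / m : ℝ) +ᵥ γ • τ) = f (γ • ((h * j / m : ℝ) +ᵥ τ)) := by
  obtain ⟨c, hc⟩ := hγ
  obtain ⟨t, ht⟩ := hij
  have hdet : γ 0 0 * γ 1 1 - γ 0 1 * γ 1 0 = 1 := by rw [← Matrix.det_fin_two, γ.det_coe]
  -- `γ'` is `γ` multiplied by the two translations; it is congruent to `γ` modulo `h`.
  obtain ⟨γ', hγ'⟩ : ∃ γ' : SL(2, ℤ), (γ' : Matrix (Fin 2) (Fin 2) ℤ) =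
      !![γ 0 0 + h * i * (m * c), γ 0 1 + h * t - h * h * i * j * c;
        γ 1 0, γ 1 1 - h * j * (m * c)] := by
    refine ⟨⟨_, ?_⟩, rfl⟩
    rw [Matrix.det_fin_two_of, hc]
    rw [hc] at hdet
    linear_combination hdet + (h * m * c) * ht
  have hmap : Matrix.SpecialLinearGroup.map (Int.castRingHom (ZMod h)) γ' =
      Matrix.SpecialLinearGroup.map (Int.castRingHom (ZMod h)) γ := by
    ext k l
    rw [Matrix.SpecialLinearGroup.map_apply_coe, Matrix.SpecialLinearGroup.map_apply_coe, hγ']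
    fin_cases k <;> fin_cases l <;> simp
  rw [← smul_eq_of_map_castRingHom_eq hf hmap]
  congr 1
  ext
  have hm' : (m : ℂ) ≠ 0 := Nat.cast_ne_zero.mpr hm
  have hden : (γ 1 0 * τ + γ 1 1 : ℂ) ≠ 0 := by
    simpa [denom] using denom_ne_zero (γ : GL (Fin 2) ℝ) τ
  have hden' : (γ 1 0 * (h * j / m + τ) + (γ 1 1 - h * j * (m * c)) : ℂ) = γ 1 0 * τ + γ 1 1 := by
    rw [hc]
    push_cast
    field_simp
    ring
  have ht' : (i * γ 1 1 - j * γ 0 0 : ℂ) = m * t := by exact_mod_cast ht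
  have hc' : (γ 1 0 : ℂ) = m ^ 2 * c := by exact_mod_cast hc
  simp only [coe_vadd, coe_specialLinearGroup_apply, algebraMap_int_eq, eq_intCast, hγ',
    Matrix.of_apply, Matrix.cons_val', Matrix.cons_val_zero, Matrix.cons_val_one]
  push_cast
  rw [hden', eq_div_iff hden, add_mul, div_mul_cancel₀ _ hden, hc']
  field_simp
  linear_combination h * ht'

lemma sum_range_eq_sum_zmod {M : Type*} [AddCommMonoid M] {m : ℕ} [NeZero m] (F : ℕ → M) :
    ∑ j ∈ Finset.range m, F j = ∑ j : ZMod m, F j.val := by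
  cases m with
  | zero => exact absurd rfl (NeZero.ne 0)
  | succ n => exact (Fin.sum_univ_eq_sum_range F (n + 1)).symm

lemma sieve_smul {h m : ℕ} (hm : m ≠ 0) {f : ℍ → ℂ} (hf : ∀ γ ∈ Γ(h), ∀ τ, f (γ • τ) = f τ)
    {γ : SL(2, ℤ)} (hγ : (m : ℤ) ^ 2 ∣ γ 1 0) (τ : ℍ) :
    sieve h m f (γ • τ) = sieve h m (fun τ ↦ f (γ • τ)) τ := by
  have : NeZero m := ⟨hm⟩
  have hdet : (γ 0 0 : ZMod m) * γ 1 1 = 1 := by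
    have hc : (γ 1 0 : ZMod m) = 0 :=
      (ZMod.intCast_zmod_eq_zero_iff_dvd _ _).mpr ((dvd_pow_self _ two_ne_zero).trans hγ)
    have h := congr_arg (Int.cast : ℤ → ZMod m) γ.det_coe
    rw [Matrix.det_fin_two] at h
    push_cast at h
    rwa [hc, mul_zero, sub_zero] at h
  let u : (ZMod m)ˣ := Units.mkOfMulEqOne ((γ 1 1 : ZMod m) ^ 2) ((γ 0 0 : ZMod m) ^ 2) <| by
    rw [← mul_pow, mul_comm, hdet, one_pow]
  simp only [sieve, sum_range_eq_sum_zmod]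
  congr 1
  refine Fintype.sum_equiv u.mulLeft _ _ fun j ↦ ?_
  refine vadd_smul_eq_smul_vadd hm hf hγ (i := (j.val : ℤ)) (j := ((u * j : ZMod m).val : ℤ)) ?_ τ
  rw [← ZMod.intCast_zmod_eq_zero_iff_dvd]
  push_cast
  rw [ZMod.natCast_zmod_val, ZMod.natCast_zmod_val, Units.val_mkOfMulEqOne]
  linear_combination -j * (γ 1 1 : ZMod m) * hdet

lemma Gamma_le_of_dvd {N M : ℕ} (h : N ∣ M) : Γ(M) ≤ Γ(N) := by
  intro γ hγ
  obtain ⟨h₀₀, h₀₁, h₁₀, h₁₁⟩ := Gamma_mem.mp hγ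
  have hcast {x : ℤ} {y : ZMod M} (hxy : x = y) : (x : ZMod N) = ZMod.castHom h (ZMod N) y := by
    rw [← hxy, map_intCast]
  exact Gamma_mem.mpr ⟨(hcast h₀₀).trans (map_one _), (hcast h₀₁).trans (map_zero _),
    (hcast h₁₀).trans (map_zero _), (hcast h₁₁).trans (map_one _)⟩

lemma sieve_smul_of_mem_Gamma {h m : ℕ} (hm : m ≠ 0) {f : ℍ → ℂ}
    (hf : ∀ γ ∈ Γ(h), ∀ τ, f (γ • τ) = f τ) {γ : SL(2, ℤ)} (hγ : γ ∈ Γ(h * m ^ 2)) (τ : ℍ) :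
    sieve h m f (γ • τ) = sieve h m f τ := by
  have hc : (m : ℤ) ^ 2 ∣ γ 1 0 :=
    (Dvd.intro_left (h : ℤ) (by push_cast; ring)).trans
      ((ZMod.intCast_zmod_eq_zero_iff_dvd _ _).mp (Gamma_mem.mp hγ).2.2.1)
  rw [sieve_smul hm hf hc]
  congr 1
  exact funext <| hf γ <| Gamma_le_of_dvd (Dvd.intro _ rfl) hγ

end SieveInvariance

section PolarPart

lemma norm_qParam_coe (h : ℝ) (τ : ℍ) : ‖𝕢 h τ‖ = Real.exp (-2 * π * τ.im / h) := by
  rw [Function.Periodic.norm_qParam, coe_im]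

lemma periodic_comp_ofComplex_of_vadd {α : Type*} {h : ℝ} {f : ℍ → α}
    (hf : ∀ τ, f (h +ᵥ τ) = f τ) : Periodic (f ∘ ofComplex) h := by
  intro z
  rcases lt_or_ge 0 z.im with hz | hz
  · have hz' : 0 < (z + h).im := by simpa using hz
    rw [comp_apply, comp_apply, ofComplex_apply_of_im_pos hz, ofComplex_apply_of_im_pos hz',
      ← hf ⟨z, hz⟩]
    congr 1
    exact UpperHalfPlane.ext (add_comm z h)
  · have hz' : (z + h).im ≤ 0 := by simpa using hz
    rw [comp_apply, comp_apply, ofComplex_apply_of_im_nonpos hz, ofComplex_apply_of_im_nonpos hz']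

lemma exists_isBigO_sub_inv_qParam {h : ℝ} (hh : 0 < h) {f : ℍ → ℂ} (hf : MDiff f)
    (hper : ∀ τ, f (h +ᵥ τ) = f τ) (hbd : f =O[atImInfty] fun τ ↦ (𝕢 h τ)⁻¹) :
    ∃ c : ℂ, (fun τ ↦ f τ - c * (𝕢 h τ)⁻¹) =O[atImInfty] (1 : ℍ → ℝ) := by
  let g (τ : ℍ) : ℂ := 𝕢 h τ * f τ
  have hq (τ : ℍ) : 𝕢 h τ ≠ 0 := Complex.exp_ne_zero _
  have hg : MDiff g :=
    (Periodic.differentiable_qParam.mdifferentiable.comp mdifferentiable_coe).mul hf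
  have hq_per (τ : ℍ) : 𝕢 h (h +ᵥ τ : ℍ) = 𝕢 h τ := by
    have hh' : (h : ℂ) ≠ 0 := ofReal_ne_zero.mpr hh.ne'
    rw [coe_vadd, Periodic.qParam, mul_add, add_div, mul_div_cancel_right₀ _ hh', Complex.exp_add,
      exp_two_pi_mul_I, one_mul, Periodic.qParam]
  have hg_per : Periodic (g ∘ ofComplex) h :=
    periodic_comp_ofComplex_of_vadd fun τ ↦ congr_arg₂ (· * ·) (hq_per τ) (hper τ)
  have hg_bdd : IsBoundedAtImInfty g :=
    ((isBigO_refl (fun τ : ℍ ↦ 𝕢 h τ) atImInfty).mul hbd).trans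
      (isBigO_of_le _ fun τ ↦ by simp [hq])
  have hdecay : (fun τ ↦ g τ - valueAtInfty g) =O[atImInfty] fun τ ↦ 𝕢 h τ :=
    ((exp_decay_sub_atImInfty hh hg_per hg hg_bdd).congr_right
      fun τ ↦ (norm_qParam_coe h τ).symm).of_norm_right
  refine ⟨valueAtInfty g, ?_⟩
  refine ((hdecay.mul (isBigO_refl (fun τ : ℍ ↦ (𝕢 h τ)⁻¹) atImInfty)).congr_left
    fun τ ↦ ?_).trans (isBigO_of_le _ fun τ ↦ by simp [hq])
  rw [sub_mul, mul_comm (g τ), inv_mul_cancel_left₀ (hq τ)]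

lemma sieve_inv_qParam {h : ℝ} (hh : h ≠ 0) {D : ℕ} (hD : 1 < D) (τ : ℍ) :
    sieve h D (fun τ ↦ (𝕢 h τ)⁻¹) τ = 0 := by
  have hh' : (h : ℂ) ≠ 0 := ofReal_ne_zero.mpr hh
  have hterm (j : ℕ) : (𝕢 h ((h * j / D : ℝ) +ᵥ τ : ℍ))⁻¹ =
      (𝕢 h τ)⁻¹ * cexp (2 * π * I * ((-1 : ℤ) * j / D)) := by
    rw [Periodic.qParam, Periodic.qParam, ← Complex.exp_neg, ← Complex.exp_neg, ← Complex.exp_add,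
      coe_vadd]
    congr 1
    push_cast
    field_simp
    ring
  have hdvd : ¬ (D : ℤ) ∣ -1 := fun h ↦ by
    have := Int.le_of_dvd one_pos (dvd_neg.mp h)
    omega
  simp only [sieve, hterm, ← Finset.mul_sum]
  rw [sum_range_exp_two_pi_I_mul_div (by omega), if_neg hdvd, mul_zero, mul_zero]

lemma isBigO_sieve_one (h : ℝ) (D : ℕ) {f : ℍ → ℂ} (hf : f =O[atImInfty] (1 : ℍ → ℝ)) :
    sieve h D f =O[atImInfty] (1 : ℍ → ℝ) := by
  refine IsBigO.const_mul_left (IsBigO.fun_sum fun j _ ↦ ?_) _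
  exact hf.comp_tendsto <| tendsto_atImInfty_of_im_eq one_pos fun τ ↦ by rw [vadd_im, one_mul]

lemma isBigO_sieve_one_of_isBigO_inv_qParam {h : ℝ} (hh : 0 < h) {D : ℕ} (hD : 1 < D) {f : ℍ → ℂ}
    (hf : MDiff f) (hper : ∀ τ, f (h +ᵥ τ) = f τ) (hbd : f =O[atImInfty] fun τ ↦ (𝕢 h τ)⁻¹) :
    sieve h D f =O[atImInfty] (1 : ℍ → ℝ) := by
  obtain ⟨c, hc⟩ := exists_isBigO_sub_inv_qParam hh hf hper hbd
  refine (isBigO_sieve_one h D hc).congr_left fun τ ↦ ?_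
  rw [← sub_zero (sieve h D f τ), ← mul_zero c, ← sieve_inv_qParam hh.ne' hD τ]
  simp only [sieve, Finset.sum_sub_distrib, ← Finset.mul_sum]
  ring

lemma smul_vadd_eq_of_Gamma_invariant {α : Type*} {h : ℕ} {f : ℍ → α}
    (hf : ∀ γ ∈ Γ(h), ∀ τ, f (γ • τ) = f τ) (γ : SL(2, ℤ)) (τ : ℍ) :
    f (γ • ((h : ℝ) +ᵥ τ)) = f (γ • τ) := by
  have hT : ModularGroup.T ^ (h : ℤ) ∈ Γ(h) := ModularGroup_T_pow_mem_Gamma h h dvd_rfl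
  have := smul_eq_of_map_castRingHom_eq hf (γ := γ) (γ' := γ * ModularGroup.T ^ (h : ℤ)) (by
    rw [map_mul, Gamma_mem'.mp hT, mul_one]) τ
  rw [mul_smul, modular_T_zpow_smul] at this
  exact_mod_cast this

end PolarPart

section EtaQuotientGrowth

/-- Multiplication by a positive integer on the upper half plane, so that `f ∘ natMul M` is the
`f(Mz)` of the theory of oldforms. -/
noncomputable def natMul (M : ℕ) [NeZero M] (τ : ℍ) : ℍ :=
  (⟨M, Nat.cast_pos.mpr (NeZero.pos M)⟩ : {x : ℝ // 0 < x}) • τ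

lemma coe_natMul (M : ℕ) [NeZero M] (τ : ℍ) : (natMul M τ : ℂ) = M * τ := by
  rw [natMul, coe_pos_real_smul, real_smul, ofReal_natCast]

lemma natMul_im (M : ℕ) [NeZero M] (τ : ℍ) : (natMul M τ).im = M * τ.im :=
  pos_real_im _ _

lemma isTheta_deltaNorm_natMul_comp (N : ℕ) [NeZero N] {M : Matrix (Fin 2) (Fin 2) ℤ}
    (hM : 0 < M.det) {φ : ℍ → ℍ}
    (hφ : ∀ τ, (φ τ : ℂ) = (M 0 0 * τ + M 0 1) / (M 1 0 * τ + M 1 1)) :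
    (deltaNorm ∘ natMul N ∘ φ) =Θ[atImInfty] fun τ ↦
      Real.exp (-2 * π * (Int.gcd (N * M 0 0) (M 1 0) ^ 2 / (N * M.det) * τ.im)) * τ.im ^ 6 := by
  have hdet : !![N * M 0 0, N * M 0 1; M 1 0, M 1 1].det = N * M.det := by
    rw [Matrix.det_fin_two_of, Matrix.det_fin_two]
    ring
  have h := isTheta_deltaNorm_comp (M := !![N * M 0 0, N * M 0 1; M 1 0, M 1 1])
    (φ := natMul N ∘ φ) (hdet ▸ mul_pos (Nat.cast_pos.mpr (NeZero.pos N)) hM) fun τ ↦ by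
      rw [comp_apply, coe_natMul, hφ]
      simp only [Matrix.of_apply, Matrix.cons_val', Matrix.cons_val_zero, Matrix.cons_val_one]
      push_cast
      ring
  simpa only [hdet, Matrix.of_apply, Matrix.cons_val', Matrix.cons_val_zero, Matrix.cons_val_one,
    Int.cast_mul, Int.cast_natCast] using! h

lemma norm_etaQuotient_pow (τ : ℍ) :
    ‖etaQuotient τ‖ ^ 24 = (4 ^ 6)⁻¹ * (deltaNorm (natMul 4 τ) / deltaNorm τ) := by
  have him := τ.im_pos.ne'
  have hη : ‖η τ‖ ≠ 0 := norm_ne_zero_iff.mpr (eta_ne_zero τ.im_pos)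
  rw [etaQuotient, deltaNorm, deltaNorm, ModularForm.discriminant, ModularForm.discriminant,
    coe_natMul, natMul_im, norm_pow, norm_pow, norm_div]
  push_cast
  field_simp

lemma isBigO_etaQuotient_comp {M : Matrix (Fin 2) (Fin 2) ℤ} (hM : 0 < M.det) {φ : ℍ → ℍ}
    (hφ : ∀ τ, (φ τ : ℂ) = (M 0 0 * τ + M 0 1) / (M 1 0 * τ + M 1 1)) {r : ℝ}
    (hr : (Int.gcd (M 0 0) (M 1 0) ^ 2 / M.det - Int.gcd (4 * M 0 0) (M 1 0) ^ 2 / (4 * M.det) : ℝ)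
      ≤ 24 * r) :
    (etaQuotient ∘ φ) =O[atImInfty] fun τ ↦ Real.exp (2 * π * (r * τ.im)) := by
  refine IsBigO.of_pow (n := 24) (by norm_num) ?_
  have h := ((isTheta_deltaNorm_natMul_comp 4 hM hφ).div (isTheta_deltaNorm_comp hM hφ)).1
  have hpow (τ : ℍ) : (4 ^ 6)⁻¹ * ((deltaNorm ∘ natMul 4 ∘ φ) τ / (deltaNorm ∘ φ) τ) =
      ‖((etaQuotient ∘ φ) ^ 24) τ‖ := by
    rw [Pi.pow_apply, norm_pow]
    exact (norm_etaQuotient_pow (φ τ)).symm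
  refine (((h.const_mul_left (4 ^ 6)⁻¹).congr_left hpow).trans
    (isBigO_of_le _ fun τ ↦ ?_)).of_norm_left
  have him := pow_ne_zero 6 τ.im_pos.ne'
  rw [mul_div_mul_right _ _ him, ← Real.exp_sub, Pi.pow_apply, ← Real.exp_nat_mul,
    Real.norm_of_nonneg (Real.exp_pos _).le, Real.norm_of_nonneg (Real.exp_pos _).le,
    Real.exp_le_exp]
  have := mul_le_mul_of_nonneg_right hr (mul_pos Real.two_pi_pos τ.im_pos).le
  simp only [Nat.cast_ofNat]
  linarith

lemma coe_smul_eq_div (γ : SL(2, ℤ)) (τ : ℍ) :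
    ((γ • τ : ℍ) : ℂ) = (γ 0 0 * τ + γ 0 1) / (γ 1 0 * τ + γ 1 1) := by
  rw [coe_specialLinearGroup_apply]
  simp only [algebraMap_int_eq, eq_intCast, ofReal_intCast]

lemma isBigO_etaQuotient_smul (γ : SL(2, ℤ)) :
    (fun τ ↦ etaQuotient (γ • τ)) =O[atImInfty] fun τ ↦ (𝕢 32 τ)⁻¹ := by
  have hcop : Int.gcd (γ 0 0) (γ 1 0) = 1 :=
    Int.isCoprime_iff_gcd_eq_one.mp (γ.isCoprime_col 0)
  have hgcd : (1 : ℝ) ≤ Int.gcd (4 * γ 0 0) (γ 1 0) := by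
    refine Nat.one_le_cast.mpr (Int.gcd_pos_iff.mpr ?_)
    rw [mul_ne_zero_iff_left four_ne_zero]
    exact (γ.isCoprime_col 0).ne_zero_or_ne_zero
  refine (isBigO_etaQuotient_comp (M := γ) (r := 1 / 32) (by simp) (coe_smul_eq_div γ) ?_).trans
    (isBigO_of_le _ fun τ ↦ ?_)
  · rw [hcop, γ.det_coe]
    push_cast
    nlinarith
  · rw [norm_inv, norm_qParam_coe, ← Real.exp_neg, Real.norm_of_nonneg (Real.exp_pos _).le]
    exact le_of_eq (by ring_nf)

lemma coe_vadd_smul_eq_div {m : ℕ} (hm : m ≠ 0) (h : ℕ) (j : ℤ) (γ : SL(2, ℤ)) (τ : ℍ) :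
    (((h * j / m : ℝ) +ᵥ γ • τ : ℍ) : ℂ) =
      ((m * γ 0 0 + h * j * γ 1 0) * τ + (m * γ 0 1 + h * j * γ 1 1)) /
        (m * γ 1 0 * τ + m * γ 1 1) := by
  have hm' : (m : ℂ) ≠ 0 := Nat.cast_ne_zero.mpr hm
  have hden : (γ 1 0 * τ + γ 1 1 : ℂ) ≠ 0 := by
    simpa [denom] using denom_ne_zero (γ : GL (Fin 2) ℝ) τ
  rw [coe_vadd, coe_smul_eq_div, mul_assoc (m : ℂ), ← mul_add]
  push_cast
  rw [div_add_div _ _ hm' hden]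
  congr 1
  ring

lemma isBigO_sieve_etaQuotient_smul {m : ℕ} (hm : m ≠ 0) (γ : SL(2, ℤ)) :
    (fun τ ↦ sieve 32 m etaQuotient (γ • τ)) =O[atImInfty]
      fun τ ↦ Real.exp (2 * π * (m ^ 2 / 24 * τ.im)) := by
  refine IsBigO.const_mul_left (IsBigO.fun_sum fun j _ ↦ ?_) _
  let M : Matrix (Fin 2) (Fin 2) ℤ := !![m * γ 0 0 + 32 * j * γ 1 0, m * γ 0 1 + 32 * j * γ 1 1;
    m * γ 1 0, m * γ 1 1]
  have hdetγ : γ 0 0 * γ 1 1 - γ 0 1 * γ 1 0 = 1 := by rw [← Matrix.det_fin_two, γ.det_coe]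
  have hdet : M.det = m ^ 2 := by
    rw [Matrix.det_fin_two_of]
    linear_combination (m : ℤ) ^ 2 * hdetγ
  have hgcd : (Int.gcd (M 0 0) (M 1 0) : ℤ) ≤ m ^ 2 := by
    refine Int.le_of_dvd (by positivity) ?_
    rw [← hdet, Matrix.det_fin_two]
    exact dvd_sub ((Int.gcd_dvd_left _ _).mul_right _) ((Int.gcd_dvd_right _ _).mul_left _)
  refine isBigO_etaQuotient_comp (M := M) (φ := fun τ ↦ (32 * j / m : ℝ) +ᵥ γ • τ)
    (hdet ▸ by positivity) (fun τ ↦ ?_) ?_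
  · have := coe_vadd_smul_eq_div hm 32 j γ τ
    simpa [M] using! this
  · have hm0 : (0 : ℝ) < (m : ℝ) ^ 2 := by positivity
    have hgcd' : (Int.gcd (M 0 0) (M 1 0) : ℝ) ≤ (m : ℝ) ^ 2 := by exact_mod_cast hgcd
    have hle : (Int.gcd (M 0 0) (M 1 0) : ℝ) ^ 2 / (m : ℝ) ^ 2 ≤ (m : ℝ) ^ 2 := by
      rw [div_le_iff₀ hm0, ← sq]
      gcongr
    have hnonneg : (0 : ℝ) ≤ Int.gcd (4 * M 0 0) (M 1 0) ^ 2 / (4 * (m : ℝ) ^ 2) := by positivity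
    rw [hdet, Int.cast_pow, Int.cast_natCast]
    linarith

end EtaQuotientGrowth

section DiscriminantRatio

lemma discriminant_smul (γ : SL(2, ℤ)) (τ : ℍ) :
    discriminant (γ • τ) = denom γ τ ^ 12 * discriminant τ := by
  have h : discriminant ∣[((12 : ℕ) : ℤ)] γ = discriminant :=
    CuspForm.discriminant.slash_action_eq' _ ⟨γ, rfl⟩
  rw [← congr_fun h τ, SL_slash_apply, zpow_neg, zpow_natCast, mul_left_comm,
    mul_inv_cancel₀ (pow_ne_zero 12 (denom_ne_zero _ τ)), mul_one]

/-- The quotient `Δ(τ)^M / Δ(Mτ)`, a modular form of weight `12(M - 1)` for `Γ₀(M)`. For `M = m²`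
with `m` prime its `q`-series is congruent to `1` modulo `m`. -/
noncomputable def discriminantRatio (M : ℕ) [NeZero M] (τ : ℍ) : ℂ :=
  discriminant τ ^ M / discriminant (natMul M τ)

variable {M : ℕ} [NeZero M]

lemma exists_natMul_smul_eq_smul_natMul {γ : SL(2, ℤ)} (hγ : (M : ℤ) ∣ γ 1 0) (τ : ℍ) :
    ∃ γ' : SL(2, ℤ), natMul M (γ • τ) = γ' • natMul M τ ∧
      denom γ' (natMul M τ) = denom γ τ := by
  obtain ⟨c, hc⟩ := hγ
  have hdet := γ.det_coe
  rw [Matrix.det_fin_two, hc] at hdet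
  obtain ⟨γ', hγ'⟩ : ∃ γ' : SL(2, ℤ),
      (γ' : Matrix (Fin 2) (Fin 2) ℤ) = !![γ 0 0, M * γ 0 1; c, γ 1 1] :=
    ⟨⟨_, by rw [Matrix.det_fin_two_of]; linear_combination hdet⟩, rfl⟩
  refine ⟨γ', UpperHalfPlane.ext ?_, ?_⟩
  · rw [coe_natMul, coe_smul_eq_div, coe_smul_eq_div, coe_natMul, hγ', hc]
    simp only [Matrix.of_apply, Matrix.cons_val', Matrix.cons_val_zero, Matrix.cons_val_one]
    push_cast
    ring
  · simp [denom, hγ', hc, coe_natMul, mul_comm, mul_left_comm]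

lemma pow_pow_eq_mul_pow_mul_sub_one {R : Type*} [Monoid R] (x : R) (a : ℕ) :
    (x ^ a) ^ M = x ^ a * x ^ (a * (M - 1)) := by
  rw [← pow_mul, ← pow_add, ← mul_one_add, add_comm 1, Nat.sub_add_cancel NeZero.one_le]

lemma discriminantRatio_slash {γ : SL(2, ℤ)} (hγ : (M : ℤ) ∣ γ 1 0) :
    discriminantRatio M ∣[((12 * (M - 1) : ℕ) : ℤ)] γ = discriminantRatio M := by
  ext τ
  obtain ⟨γ', hsmul, hdenom⟩ := exists_natMul_smul_eq_smul_natMul hγ τ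
  have hd : denom γ τ ≠ 0 := denom_ne_zero _ τ
  rw [SL_slash_apply, zpow_neg, zpow_natCast, discriminantRatio, hsmul, discriminant_smul,
    discriminant_smul, hdenom, mul_pow, pow_pow_eq_mul_pow_mul_sub_one, discriminantRatio]
  field_simp

lemma norm_discriminantRatio_mul_im_pow (τ : ℍ) :
    ‖discriminantRatio M τ‖ * τ.im ^ (6 * (M - 1)) =
      M ^ 6 * (deltaNorm τ ^ M / deltaNorm (natMul M τ)) := by
  have him : τ.im ≠ 0 := τ.im_pos.ne'
  have hM : (M : ℝ) ≠ 0 := NeZero.ne _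
  rw [discriminantRatio, deltaNorm, deltaNorm, natMul_im, norm_div, norm_pow, mul_pow,
    pow_pow_eq_mul_pow_mul_sub_one, mul_pow]
  field_simp

lemma isBigO_discriminantRatio_slash (γ : SL(2, ℤ)) :
    (discriminantRatio M ∣[((12 * (M - 1) : ℕ) : ℤ)] γ) =O[atImInfty]
      fun τ ↦ Real.exp (-2 * π * ((M - Int.gcd (M * γ 0 0) (γ 1 0) ^ 2 / M) * τ.im)) := by
  have hΔ := (isTheta_deltaNorm.1.pow M).mul
    (isTheta_deltaNorm_natMul_comp M (M := γ) (by simp) (coe_smul_eq_div γ)).inv.1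
  have hweight : ((12 * (M - 1) : ℕ) : ℤ) = 2 * (6 * (M - 1) : ℕ) := by push_cast; ring
  have hleft (τ : ℍ) : M ^ 6 * ((deltaNorm ^ M) τ * (deltaNorm ∘ natMul M ∘ (γ • ·))⁻¹ τ) /
      τ.im ^ (6 * (M - 1)) = ‖(discriminantRatio M ∣[((12 * (M - 1) : ℕ) : ℤ)] γ) τ‖ := by
    rw [div_eq_iff (pow_ne_zero _ τ.im_pos.ne'), hweight, norm_slash_mul_im_pow,
      norm_discriminantRatio_mul_im_pow, deltaNorm_smul, div_eq_mul_inv]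
    rfl
  refine (((hΔ.const_mul_left (M ^ 6)).mul (isBigO_refl
    (fun τ : ℍ ↦ (τ.im ^ (6 * (M - 1)))⁻¹) _)).congr hleft fun τ ↦ ?_).of_norm_left
  have him := τ.im_pos.ne'
  set g : ℝ := ((Int.gcd (M * γ 0 0) (γ 1 0) : ℕ) : ℝ)
  have hexp : Real.exp (-2 * π * ((M - g ^ 2 / M) * τ.im)) =
      Real.exp (-2 * π * τ.im) ^ M * (Real.exp (-2 * π * (g ^ 2 / M * τ.im)))⁻¹ := by
    rw [← Real.exp_nat_mul, ← Real.exp_neg, ← Real.exp_add]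
    congr 1
    ring
  rw [hexp, γ.det_coe, Int.cast_one, mul_one, mul_pow, pow_pow_eq_mul_pow_mul_sub_one]
  field_simp

end DiscriminantRatio

section Holomorphy

lemma mdifferentiable_of_coe {φ : ℍ → ℍ} (hφ : MDiff fun τ ↦ (φ τ : ℂ)) : MDiff φ := fun τ ↦ by
  simpa [comp_def] using (mdifferentiableAt_ofComplex (φ τ).im_pos).comp τ (hφ τ)

lemma mdifferentiable_vadd (x : ℝ) : MDiff fun τ : ℍ ↦ x +ᵥ τ :=
  mdifferentiable_of_coe (mdifferentiable_const.add mdifferentiable_coe)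

lemma mdifferentiable_natMul (M : ℕ) [NeZero M] : MDiff (natMul M) :=
  mdifferentiable_of_coe <| by
    simp only [coe_natMul]
    exact mdifferentiable_const.mul mdifferentiable_coe

lemma mdifferentiable_eta : MDiff fun τ : ℍ ↦ η τ := fun τ ↦
  (differentiableAt_eta_of_mem_upperHalfPlaneSet τ.im_pos).mdifferentiableAt.comp τ
    (mdifferentiable_coe τ)

lemma mdifferentiable_etaQuotient : MDiff etaQuotient := by
  refine MDifferentiable.div ?_ mdifferentiable_eta fun τ ↦ eta_ne_zero τ.im_pos
  simpa only [coe_natMul, comp_def, Nat.cast_ofNat] using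
    mdifferentiable_eta.comp (mdifferentiable_natMul 4)

lemma mdifferentiable_sieve (h : ℝ) (D : ℕ) {f : ℍ → ℂ} (hf : MDiff f) : MDiff (sieve h D f) := by
  refine mdifferentiable_const.mul ?_
  rw [← Finset.sum_fn]
  exact Finset.sum_induction _ (fun g : ℍ → ℂ ↦ MDiff g) (fun _ _ ↦ .add) mdifferentiable_const
    fun j _ ↦ hf.comp (mdifferentiable_vadd _)

lemma mdifferentiable_discriminantRatio (M : ℕ) [NeZero M] : MDiff (discriminantRatio M) :=
  ((CuspForm.discriminant.holo').pow M).div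
    (CuspForm.discriminant.holo'.comp (mdifferentiable_natMul M)) fun _ ↦ discriminant_ne_zero _

lemma mdifferentiable_comp_smul {f : ℍ → ℂ} (hf : MDiff f) (γ : SL(2, ℤ)) :
    MDiff fun τ ↦ f (γ • τ) :=
  hf.comp (mdifferentiable_smul (g := (γ : GL (Fin 2) ℝ)) (by simp))

end Holomorphy

section SievedForm

lemma isBigO_sieve_etaQuotient_smul_one {m : ℕ} (hm : 1 < m) {γ : SL(2, ℤ)}
    (hγ : (m : ℤ) ^ 2 ∣ γ 1 0) :
    (fun τ ↦ sieve 32 m etaQuotient (γ • τ)) =O[atImInfty] (1 : ℍ → ℝ) := by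
  have hinv : ∀ γ ∈ Γ(32), ∀ τ, etaQuotient (γ • τ) = etaQuotient τ :=
    fun _ ↦ etaQuotient_smul_of_mem_Gamma
  have hsieve (τ : ℍ) := sieve_smul (h := 32) (by lia) hinv hγ τ
  have hper (τ : ℍ) := smul_vadd_eq_of_Gamma_invariant hinv γ τ
  simp only [Nat.cast_ofNat] at hsieve hper
  simp only [hsieve]
  exact isBigO_sieve_one_of_isBigO_inv_qParam (by norm_num) hm
    (mdifferentiable_comp_smul mdifferentiable_etaQuotient γ) hper (isBigO_etaQuotient_smul γ)

lemma mul_slash_eq_smul_mul_slash (f g : ℍ → ℂ) (k : ℤ) (γ : SL(2, ℤ)) :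
    (f * g) ∣[k] γ = (fun τ ↦ f (γ • τ)) * (g ∣[k] γ) := by
  ext τ
  rw [SL_slash_apply, Pi.mul_apply, Pi.mul_apply, SL_slash_apply, mul_assoc]

lemma gcd_natCast_mul_dvd (M : ℕ) (γ : SL(2, ℤ)) : Int.gcd (M * γ 0 0) (γ 1 0) ∣ M := by
  have hdet : γ 0 0 * γ 1 1 - γ 0 1 * γ 1 0 = 1 := by rw [← Matrix.det_fin_two, γ.det_coe]
  have hM : (M : ℤ) = M * γ 0 0 * γ 1 1 - M * γ 0 1 * γ 1 0 := by linear_combination -M * hdet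
  rw [← Int.natCast_dvd_natCast]
  exact (dvd_sub ((Int.gcd_dvd_left _ _).mul_right _) ((Int.gcd_dvd_right _ _).mul_left _)).trans
    hM.symm.dvd

lemma gcd_natCast_mul_sq_div_le {M : ℕ} [NeZero M] (γ : SL(2, ℤ)) :
    (Int.gcd (M * γ 0 0) (γ 1 0) ^ 2 / M : ℝ) ≤ M := by
  have hM : (0 : ℝ) < M := Nat.cast_pos.mpr (NeZero.pos M)
  rw [div_le_iff₀ hM, ← sq]
  gcongr
  exact Nat.le_of_dvd (NeZero.pos M) (gcd_natCast_mul_dvd M γ)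

lemma gcd_natCast_mul_sq_div_le_of_not_dvd {M : ℕ} [NeZero M] {γ : SL(2, ℤ)}
    (hγ : ¬ (M : ℤ) ∣ γ 1 0) : (Int.gcd (M * γ 0 0) (γ 1 0) ^ 2 / M : ℝ) ≤ M / 4 := by
  have hM : (0 : ℝ) < M := Nat.cast_pos.mpr (NeZero.pos M)
  have hlt : Int.gcd (M * γ 0 0) (γ 1 0) < M :=
    (Nat.le_of_dvd (NeZero.pos M) (gcd_natCast_mul_dvd M γ)).lt_of_ne fun h ↦
      hγ (h ▸ Int.gcd_dvd_right _ _)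
  have h2 : 2 * Int.gcd (M * γ 0 0) (γ 1 0) ≤ M := by
    have := Nat.le_of_dvd (Nat.sub_pos_of_lt hlt)
      (Nat.dvd_sub (gcd_natCast_mul_dvd M γ) dvd_rfl)
    lia
  have h2' : (Int.gcd (M * γ 0 0) (γ 1 0) : ℝ) ≤ M / 2 := by
    rw [le_div_iff₀' two_pos]
    exact_mod_cast h2
  calc (Int.gcd (M * γ 0 0) (γ 1 0) ^ 2 / M : ℝ) ≤ (M / 2) ^ 2 / M := by gcongr
    _ = M / 4 := by field_simp; norm_num

variable {m : ℕ} [NeZero m]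

lemma isBigO_sieve_mul_discriminantRatio_slash (hm : 1 < m) (γ : SL(2, ℤ)) :
    ((sieve 32 m etaQuotient * discriminantRatio (m ^ 2)) ∣[((12 * (m ^ 2 - 1) : ℕ) : ℤ)] γ)
      =O[atImInfty] (1 : ℍ → ℝ) := by
  rw [mul_slash_eq_smul_mul_slash]
  have hR := isBigO_discriminantRatio_slash (M := m ^ 2) γ
  by_cases hγ : (m : ℤ) ^ 2 ∣ γ 1 0
  · refine ((isBigO_sieve_etaQuotient_smul_one hm hγ).mul hR).trans (isBigO_of_le _ fun τ ↦ ?_)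
    have hgcd := gcd_natCast_mul_sq_div_le (M := m ^ 2) γ
    rw [Pi.one_apply, one_mul, norm_one, Real.norm_of_nonneg (Real.exp_pos _).le,
      Real.exp_le_one_iff, neg_mul, neg_mul, neg_nonpos]
    exact mul_nonneg Real.two_pi_pos.le (mul_nonneg (sub_nonneg.mpr hgcd) τ.im_pos.le)
  · refine ((isBigO_sieve_etaQuotient_smul (by lia) γ).mul hR).trans (isBigO_of_le _ fun τ ↦ ?_)
    have hgcd := gcd_natCast_mul_sq_div_le_of_not_dvd (M := m ^ 2) (by exact_mod_cast hγ)
    rw [Pi.one_apply, norm_one, ← Real.exp_add, Real.norm_of_nonneg (Real.exp_pos _).le,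
      Real.exp_le_one_iff, neg_mul, neg_mul, ← sub_eq_add_neg, ← mul_sub, ← sub_mul]
    refine mul_nonpos_of_nonneg_of_nonpos Real.two_pi_pos.le
      (mul_nonpos_of_nonpos_of_nonneg ?_ τ.im_pos.le)
    push_cast at hgcd ⊢
    nlinarith [sq_nonneg (m : ℝ)]

theorem exists_modularForm_eq_sieve_mul_discriminantRatio (hm : 1 < m) :
    ∃ F : ModularForm Γ(32 * m ^ 2) ((12 * (m ^ 2 - 1) : ℕ) : ℤ),
      ⇑F = sieve 32 m etaQuotient * discriminantRatio (m ^ 2) := by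
  refine ⟨⟨⟨sieve 32 m etaQuotient * discriminantRatio (m ^ 2), ?_⟩, ?_, fun hc ↦ ?_⟩, rfl⟩
  · rintro _ ⟨γ, hγ, rfl⟩
    have hc : ((m ^ 2 : ℕ) : ℤ) ∣ γ 1 0 :=
      (Dvd.intro_left 32 (by push_cast; ring)).trans
        ((ZMod.intCast_zmod_eq_zero_iff_dvd _ _).mp (Gamma_mem.mp hγ).2.2.1)
    refine (mul_slash_eq_smul_mul_slash _ _ _ γ).trans ?_
    rw [discriminantRatio_slash hc]
    congr 1
    ext τ
    exact_mod_cast sieve_smul_of_mem_Gamma (h := 32) (by lia)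
      (fun _ ↦ etaQuotient_smul_of_mem_Gamma) hγ τ
  · exact (mdifferentiable_sieve _ _ mdifferentiable_etaQuotient).mul
      (mdifferentiable_discriminantRatio _)
  · rw [Subgroup.IsArithmetic.isCusp_iff_isCusp_SL2Z] at hc
    rw [OnePoint.isBoundedAt_iff_forall_SL2Z hc]
    exact fun γ _ ↦ isBigO_sieve_mul_discriminantRatio_slash hm γ

end SievedForm

section EulerProduct

open PowerSeries
open scoped PowerSeries.WithPiTopology

lemma continuous_powerSeriesExpand (R : Type*) [CommRing R] [TopologicalSpace R] {M : ℕ}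
    (hM : M ≠ 0) : Continuous (PowerSeries.expand M hM : R⟦X⟧ →ₐ[R] R⟦X⟧) := by
  refine continuous_iff_continuousAt.mpr fun p ↦ ?_
  refine (WithPiTopology.tendsto_iff_coeff_tendsto R _ _ _).mpr fun d ↦ ?_
  simp only [coeff_expand]
  split_ifs
  · exact (WithPiTopology.continuous_coeff R _).tendsto p
  · exact tendsto_const_nhds

lemma hasProd_one_sub_X_pow_mul (R : Type*) [CommRing R] [TopologicalSpace R] {M : ℕ}
    (hM : M ≠ 0) :
    HasProd (fun n ↦ 1 - X ^ ((n + 1) * M)) (PowerSeries.expand M hM (pentagonalSeries R)) := by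
  convert! (WithPiTopology.hasProd_one_sub_X_pow R).map _ (continuous_powerSeriesExpand R hM)
  simp only [Function.comp_apply, map_sub, map_one, map_pow, expand_X, ← pow_mul, mul_comm M]

lemma map_pentagonalSeries {R S : Type*} [CommRing R] [CommRing S] (f : R →+* S) :
    PowerSeries.map f (pentagonalSeries R) = pentagonalSeries S := by
  ext n
  by_cases hn : n ∈ Set.range pentagonal
  · obtain ⟨k, rfl⟩ := hn
    simp [Int.coe_negOnePow]
  · rw [coeff_map, coeff_pentagonalSeries_eq_zero R hn, coeff_pentagonalSeries_eq_zero S hn,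
      map_zero]

lemma constantCoeff_pentagonalSeries (R : Type*) [CommRing R] :
    constantCoeff (pentagonalSeries R) = 1 := by
  rw [← coeff_zero_eq_constantCoeff_apply]
  simpa [pentagonal] using coeff_pentagonalSeries_pentagonal R 0

lemma pentagonalSeries_pow_char_pow (R : Type*) [CommRing R] (p : ℕ) [Fact p.Prime] [CharP R p]
    (k : ℕ) :
    pentagonalSeries R ^ p ^ k =
      PowerSeries.expand (p ^ k) (pow_ne_zero k (NeZero.ne p)) (pentagonalSeries R) := by
  let _ : TopologicalSpace R := ⊥
  have : DiscreteTopology R := ⟨rfl⟩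
  have : CharP R⟦X⟧ p := charP_of_injective_ringHom (C_injective (R := R)) p
  refine ((WithPiTopology.hasProd_one_sub_X_pow R).pow (p ^ k)).unique ?_
  convert! hasProd_one_sub_X_pow_mul R (pow_ne_zero k (NeZero.ne p)) using 2 with n
  rw [sub_pow_char_pow, one_pow, ← pow_mul]

lemma mk_bReg_mul_pentagonalSeries {k : ℕ} (hk : k ≠ 0) :
    PowerSeries.mk (fun n ↦ (bReg k n : ℤ)) * pentagonalSeries ℤ =
      PowerSeries.expand k hk (pentagonalSeries ℤ) := by
  have hcard (n : ℕ) : bReg k n = (Nat.Partition.countRestricted n k).card := by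
    rw [← Nat.Partition.card_restricted_eq_card_countRestricted n (Nat.pos_of_ne_zero hk)]
    simp only [bReg, Nat.Partition.restricted]
  simp_rw [hcard]
  have hprod := Nat.Partition.hasProd_powerSeriesMk_card_countRestricted ℤ (Nat.pos_of_ne_zero hk)
  refine (hprod.mul (WithPiTopology.hasProd_one_sub_X_pow ℤ)).unique ?_
  convert! hasProd_one_sub_X_pow_mul ℤ hk using 2 with n
  simp_rw [pow_mul]
  exact geom_sum_mul_neg _ k

end EulerProduct

section Represents

open PowerSeries
open scoped Polynomial

/-- The power series `p` converges to the function `g` on the open unit disc. -/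
def Represents (p : ℂ⟦X⟧) (g : ℂ → ℂ) : Prop :=
  ∀ q, ‖q‖ < 1 → HasSum (fun n ↦ coeff n p * q ^ n) (g q)

lemma hasSum_coeff_mul {p r : ℂ⟦X⟧} {q u v : ℂ} (hp : HasSum (fun n ↦ coeff n p * q ^ n) u)
    (hr : HasSum (fun n ↦ coeff n r * q ^ n) v) :
    HasSum (fun n ↦ coeff n (p * r) * q ^ n) (u * v) := by
  have hp' := hp.summable.norm
  have hr' := hr.summable.norm
  have hprod := tsum_mul_tsum_eq_tsum_sum_antidiagonal_of_summable_norm hp' hr'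
  rw [hp.tsum_eq, hr.tsum_eq] at hprod
  rw [hprod]
  convert! (summable_norm_sum_mul_antidiagonal_of_summable_norm hp' hr').of_norm.hasSum using 2
    with n
  rw [coeff_mul, Finset.sum_mul]
  refine Finset.sum_congr rfl fun x hx ↦ ?_
  rw [← Finset.HasAntidiagonal.mem_antidiagonal.mp hx, pow_add]
  ring

lemma hasSum_coeff_expand {p : ℂ⟦X⟧} {w v : ℂ} {M : ℕ} (hM : M ≠ 0)
    (hp : HasSum (fun n ↦ coeff n p * (w ^ M) ^ n) v) :
    HasSum (fun n ↦ coeff n (PowerSeries.expand M hM p) * w ^ n) v := by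
  have : NeZero M := ⟨hM⟩
  simpa only [coeff_expand] using hasSum_dilate hp

namespace Represents

variable {p r : ℂ⟦X⟧} {g h : ℂ → ℂ}

protected lemma mul (hp : Represents p g) (hr : Represents r h) :
    Represents (p * r) (fun q ↦ g q * h q) :=
  fun q hq ↦ hasSum_coeff_mul (hp q hq) (hr q hq)

protected lemma X_pow (k : ℕ) : Represents (X ^ k) (fun q ↦ q ^ k) := fun q _ ↦ by
  convert! hasSum_ite_eq k (q ^ k) using 2 with n
  rw [coeff_X_pow]
  split_ifs with hn <;> simp [hn]

protected lemma one : Represents 1 (fun _ ↦ 1) := by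
  simpa using Represents.X_pow 0

protected lemma pow (hp : Represents p g) (k : ℕ) : Represents (p ^ k) (fun q ↦ g q ^ k) := by
  induction k with
  | zero => simpa using Represents.one
  | succ k ih => simpa only [pow_succ] using ih.mul hp

protected lemma expand (hp : Represents p g) {M : ℕ} (hM : M ≠ 0) :
    Represents (PowerSeries.expand M hM p) (fun q ↦ g (q ^ M)) := fun q hq ↦
  hasSum_coeff_expand hM <| hp _ <| by simpa using pow_lt_one₀ (norm_nonneg q) hq hM

protected lemma unique (hp : Represents p g) (hr : Represents r g) : p = r := by
  ext n
  rw [← sub_eq_zero]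
  refine coeff_eq_zero_of_isBigO_qParam_pow (B := n + 1) (f := 0)
    (c := fun n ↦ coeff n p - coeff n r) one_pos (fun τ ↦ ?_) (isBigO_zero _ _) n n.lt_succ_self
  have hq : ‖𝕢 1 (τ : ℂ)‖ < 1 := Periodic.norm_qParam_lt_one one_pos τ.im_pos
  simpa [sub_mul] using (hp _ hq).sub (hr _ hq)

lemma exists_of_differentiableOn (hg : DifferentiableOn ℂ g (Metric.ball 0 1)) :
    ∃ p, Represents p g := by
  refine ⟨.mk fun n ↦ (n.factorial : ℂ)⁻¹ * iteratedDeriv n g 0, fun q hq ↦ ?_⟩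
  convert! hasSum_taylorSeries_on_ball hg (z := q) (by simpa using hq) using 2 with n
  simp only [coeff_mk, sub_zero, smul_eq_mul]
  ring

lemma of_mul_eq_one (hp : Represents p g) (hg : DifferentiableOn ℂ g (Metric.ball 0 1))
    (hg0 : ∀ q, ‖q‖ < 1 → g q ≠ 0) (hpr : p * r = 1) : Represents r (fun q ↦ (g q)⁻¹) := by
  obtain ⟨t, ht⟩ := exists_of_differentiableOn (hg.fun_inv fun q hq ↦ hg0 q (by simpa using hq))
  have hpt : p * t = 1 := by
    refine Represents.unique (g := fun q ↦ g q * (g q)⁻¹) (hp.mul ht) fun q hq ↦ ?_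
    simpa only [mul_inv_cancel₀ (hg0 q hq)] using Represents.one q hq
  rwa [← left_inv_eq_right_inv (mul_comm p r ▸ hpr) hpt] at ht

end Represents

lemma tendstoLocallyUniformlyOn_iteratedDeriv {ι : Type*} {φ : Filter ι} {U : Set ℂ}
    (hU : IsOpen U) (k : ℕ) {F : ι → ℂ → ℂ} {f : ℂ → ℂ}
    (hf : TendstoLocallyUniformlyOn F f φ U) (hF : ∀ᶠ i in φ, DifferentiableOn ℂ (F i) U) :
    TendstoLocallyUniformlyOn (fun i ↦ iteratedDeriv k (F i)) (iteratedDeriv k f) φ U := by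
  induction k generalizing F f with
  | zero => simpa only [iteratedDeriv_zero] using hf
  | succ k ih =>
    simp only [iteratedDeriv_succ']
    exact ih (hf.deriv hF hU) (hF.mono fun _ h ↦ h.deriv hU)

lemma iteratedDeriv_eval_zero (P : ℂ[X]) (k : ℕ) :
    iteratedDeriv k (fun z ↦ P.eval z) 0 = k.factorial * P.coeff k := by
  have hiter :
      iteratedDeriv k (fun z ↦ P.eval z) = fun z ↦ (Polynomial.derivative^[k] P).eval z := by
    induction k with
    | zero => simp
    | succ k ih => rw [iteratedDeriv_succ, ih, Function.iterate_succ_apply']; ext; simp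
  simp only [hiter]
  rw [← Polynomial.coeff_zero_eq_eval_zero, Polynomial.coeff_iterate_derivative]
  simp [Nat.descFactorial_self]

lemma Represents.of_tendstoLocallyUniformlyOn {ι : Type*} {φ : Filter ι} [φ.NeBot] {P : ι → ℂ[X]}
    {p : ℂ⟦X⟧} {g : ℂ → ℂ}
    (hP : TendstoLocallyUniformlyOn (fun i z ↦ (P i).eval z) g φ (Metric.ball 0 1))
    (hp : ∀ n, ∀ᶠ i in φ, (P i).coeff n = coeff n p) : Represents p g := by
  have hdiff (i : ι) : DifferentiableOn ℂ (fun z ↦ (P i).eval z) (Metric.ball 0 1) :=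
    (P i).differentiable.differentiableOn
  have hcoeff (n : ℕ) : iteratedDeriv n g 0 = n.factorial * coeff n p := by
    have hlim := (tendstoLocallyUniformlyOn_iteratedDeriv Metric.isOpen_ball n hP
      (.of_forall hdiff)).tendsto_at (Metric.mem_ball_self one_pos)
    refine tendsto_nhds_unique hlim (tendsto_nhds_of_eventually_eq ?_)
    filter_upwards [hp n] with i hi
    rw [iteratedDeriv_eval_zero, hi]
  intro q hq
  have hg := hP.differentiableOn (.of_forall hdiff) Metric.isOpen_ball
  convert! hasSum_taylorSeries_on_ball hg (z := q) (by simpa using hq) using 2 with n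
  have hn : (n.factorial : ℂ) ≠ 0 := mod_cast n.factorial_ne_zero
  rw [hcoeff, sub_zero, smul_eq_mul, smul_eq_mul]
  field_simp

/-- The Euler product `∏ (1 - q ^ n)` as a function on the open unit disc. -/
noncomputable def eulerProduct (q : ℂ) : ℂ := ∏' n : ℕ, (1 - q ^ (n + 1))

lemma eulerProduct_ne_zero {q : ℂ} (hq : ‖q‖ < 1) : eulerProduct q ≠ 0 := by
  refine tprod_one_add_ne_zero_of_summable (f := fun n ↦ -q ^ (n + 1)) (fun n h ↦ ?_) ?_
  · have hpow : ‖q ^ (n + 1)‖ < 1 := by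
      simpa using pow_lt_one₀ (norm_nonneg q) hq n.succ_ne_zero
    rw [← sub_eq_add_neg, sub_eq_zero] at h
    simp [← h] at hpow
  · simpa using (summable_nat_add_iff 1).mpr (summable_geometric_of_lt_one (norm_nonneg _) hq)

lemma represents_pentagonalSeries : Represents (pentagonalSeries ℂ) eulerProduct := by
  refine .of_tendstoLocallyUniformlyOn (φ := atTop)
    (P := fun s ↦ ∏ n ∈ s, (1 - Polynomial.X ^ (n + 1))) ?_ fun n ↦ ?_
  · have hprod := multipliableLocallyUniformlyOn_one_sub_pow.hasProdLocallyUniformlyOn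
    simpa [Polynomial.eval_prod] using! hprod
  · filter_upwards [coeff_prod_one_sub_X_pow_eventually_eq ℂ n] with s hs
    rw [← hs, ← Polynomial.coeff_coe, ← Polynomial.coeToPowerSeries.ringHom_apply, map_prod]
    simp

lemma represents_inv_eulerProduct {r : ℂ⟦X⟧} (hr : pentagonalSeries ℂ * r = 1) :
    Represents r (fun q ↦ (eulerProduct q)⁻¹) :=
  represents_pentagonalSeries.of_mul_eq_one differentiableOn_tprod_one_sub_pow
    (fun _ ↦ eulerProduct_ne_zero) hr

end Represents

section Coefficients

open PowerSeries

/-- The inverse of `pentagonalSeries ℤ`, i.e. the generating function of the partition function. -/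
noncomputable def eulerInverse : ℤ⟦X⟧ :=
  invOfUnit (pentagonalSeries ℤ) 1

lemma pentagonalSeries_mul_eulerInverse : pentagonalSeries ℤ * eulerInverse = 1 :=
  mul_invOfUnit _ _ (constantCoeff_pentagonalSeries ℤ)

lemma represents_map_pentagonalSeries :
    Represents (PowerSeries.map (Int.castRingHom ℂ) (pentagonalSeries ℤ)) eulerProduct := by
  rw [map_pentagonalSeries]
  exact represents_pentagonalSeries

lemma represents_map_eulerInverse :
    Represents (PowerSeries.map (Int.castRingHom ℂ) eulerInverse)
      (fun q ↦ (eulerProduct q)⁻¹) := by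
  refine represents_inv_eulerProduct ?_
  rw [← map_pentagonalSeries (Int.castRingHom ℂ), ← map_mul, pentagonalSeries_mul_eulerInverse,
    map_one]

lemma represents_map_mk_bReg {k : ℕ} (hk : k ≠ 0) :
    Represents (PowerSeries.map (Int.castRingHom ℂ) (.mk fun n ↦ (bReg k n : ℤ)))
      (fun q ↦ eulerProduct (q ^ k) * (eulerProduct q)⁻¹) := by
  have hmk : PowerSeries.mk (fun n ↦ (bReg k n : ℤ)) =
      PowerSeries.expand k hk (pentagonalSeries ℤ) * eulerInverse := by
    rw [← mk_bReg_mul_pentagonalSeries hk, mul_assoc, pentagonalSeries_mul_eulerInverse, mul_one]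
  rw [hmk, map_mul, map_expand]
  exact (represents_map_pentagonalSeries.expand hk).mul represents_map_eulerInverse

lemma eta_eq_qParam_mul_eulerProduct (z : ℂ) : η z = 𝕢 24 z * eulerProduct (𝕢 1 z) := rfl

lemma etaQuotient_eq_qParam_pow_mul (τ : ℍ) :
    etaQuotient τ =
      𝕢 32 τ ^ 4 * (eulerProduct (𝕢 1 τ ^ 4) * (eulerProduct (𝕢 1 τ))⁻¹) := by
  have hη : η (4 * τ) = 𝕢 24 τ ^ 4 * eulerProduct (𝕢 1 τ ^ 4) := by
    rw [eta_eq_qParam_mul_eulerProduct, ← qParam_natCast_mul, ← qParam_natCast_mul, Nat.cast_ofNat]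
  have hq : 𝕢 24 τ ^ 4 = 𝕢 32 τ ^ 4 * 𝕢 24 τ := by
    simp only [Periodic.qParam, ← Complex.exp_nat_mul, ← Complex.exp_add]
    congr 1
    push_cast
    ring
  rw [etaQuotient, hη, eta_eq_qParam_mul_eulerProduct, hq, mul_comm (𝕢 24 _), mul_right_comm,
    mul_div_mul_right _ _ (Periodic.qParam_ne_zero _), mul_div_assoc, div_eq_mul_inv]

/-- The `q₃₂`-series `∑ b₄(n) q₃₂ ^ (4 (8 n + 1))` of `etaQuotient`. -/
noncomputable def etaQuotientSeries : ℤ⟦X⟧ :=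
  X ^ 4 * PowerSeries.expand 32 (by norm_num) (.mk fun n ↦ (bReg 4 n : ℤ))

lemma coeff_etaQuotientSeries (n : ℕ) :
    coeff (4 * (8 * n + 1)) etaQuotientSeries = bReg 4 n := by
  rw [etaQuotientSeries, show 4 * (8 * n + 1) = 32 * n + 4 by ring, coeff_X_pow_mul,
    coeff_expand_mul, coeff_mk]

lemma hasSum_etaQuotient (τ : ℍ) :
    HasSum (fun n ↦ coeff n (PowerSeries.map (Int.castRingHom ℂ) etaQuotientSeries) * 𝕢 32 τ ^ n)
      (etaQuotient τ) := by
  have hq32 : 𝕢 1 (τ : ℂ) = 𝕢 32 τ ^ 32 := by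
    simpa using (qParam_mul_natCast_pow 1 (M := 32) (by norm_num) τ).symm
  rw [etaQuotientSeries, map_mul, map_pow, map_X, map_expand, etaQuotient_eq_qParam_pow_mul, hq32]
  exact ((Represents.X_pow 4).mul ((represents_map_mk_bReg (by norm_num)).expand (by norm_num))) _
    (Periodic.norm_qParam_lt_one (by norm_num) τ.im_pos)

/-- The `q`-series of `discriminantRatio M`. -/
noncomputable def discriminantRatioSeries (M : ℕ) [NeZero M] : ℤ⟦X⟧ :=
  (pentagonalSeries ℤ ^ M * PowerSeries.expand M (NeZero.ne M) eulerInverse) ^ 24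

lemma hasSum_discriminantRatio (M : ℕ) [NeZero M] (τ : ℍ) :
    HasSum (fun n ↦ coeff n (PowerSeries.map (Int.castRingHom ℂ) (discriminantRatioSeries M)) *
      𝕢 1 τ ^ n) (discriminantRatio M τ) := by
  have hval : discriminantRatio M τ =
      (eulerProduct (𝕢 1 τ) ^ M * (eulerProduct (𝕢 1 τ ^ M))⁻¹) ^ 24 := by
    have hne : 𝕢 24 τ ^ M ≠ 0 := pow_ne_zero _ (Periodic.qParam_ne_zero _)
    rw [discriminantRatio, ModularForm.discriminant, ModularForm.discriminant, coe_natMul,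
      eta_eq_qParam_mul_eulerProduct, eta_eq_qParam_mul_eulerProduct, qParam_natCast_mul,
      qParam_natCast_mul, pow_right_comm, ← div_pow, mul_pow, mul_div_mul_left _ _ hne,
      div_eq_mul_inv]
  rw [hval, discriminantRatioSeries, map_pow, map_mul, map_pow, map_expand]
  exact (((represents_map_pentagonalSeries.pow M).mul
    (represents_map_eulerInverse.expand (NeZero.ne M))).pow 24) _
    (Periodic.norm_qParam_lt_one one_pos τ.im_pos)

lemma map_discriminantRatioSeries (p k : ℕ) [Fact p.Prime] :
    PowerSeries.map (Int.castRingHom (ZMod p)) (discriminantRatioSeries (p ^ k)) = 1 := by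
  rw [discriminantRatioSeries, map_pow, map_mul, map_pow, map_pentagonalSeries,
    pentagonalSeries_pow_char_pow, ← map_pentagonalSeries (Int.castRingHom (ZMod p)), ← map_expand,
    ← map_mul, ← map_mul, pentagonalSeries_mul_eulerInverse, map_one, map_one, one_pow]

theorem exists_mem_integralForms_dvd_sub_bReg {m : ℕ} (hm : m.Prime) :
    ∃ a ∈ integralForms Γ(32 * m ^ 2) (12 * (m ^ 2 - 1) : ℕ) (32 * m ^ 2 : ℕ),
      ∀ n, m ∣ 4 * (8 * n + 1) → (m : ℤ) ∣ a (4 * m ^ 2 * (8 * n + 1)) - bReg 4 n := by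
  have : Fact m.Prime := ⟨hm⟩
  have : NeZero m := ⟨hm.ne_zero⟩
  have hm2 : m ^ 2 ≠ 0 := pow_ne_zero 2 hm.ne_zero
  have hN : 32 * m ^ 2 ≠ 0 := mul_ne_zero (by norm_num) hm2
  let f₀ : ℤ⟦X⟧ := .mk fun n ↦ if m ∣ n then coeff n etaQuotientSeries else 0
  let a : ℤ⟦X⟧ := PowerSeries.expand (m ^ 2) hm2 f₀ *
    PowerSeries.expand (32 * m ^ 2) hN (discriminantRatioSeries (m ^ 2))
  obtain ⟨F, hF⟩ := exists_modularForm_eq_sieve_mul_discriminantRatio hm.one_lt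
  refine ⟨fun n ↦ coeff n a, ⟨F, fun τ ↦ ?_⟩, fun n hn ↦ ?_⟩
  · have hf₀ : HasSum (fun n ↦ coeff n (PowerSeries.map (Int.castRingHom ℂ) f₀) * 𝕢 32 τ ^ n)
        (sieve 32 m etaQuotient τ) := by
      convert! hasSum_sieve (by norm_num) hm.ne_zero hasSum_etaQuotient τ using 3 with n
      simp only [f₀, coeff_map, coeff_mk, apply_ite (Int.castRingHom ℂ), map_zero]
    have hratio := hasSum_discriminantRatio (m ^ 2) τ
    rw [← qParam_mul_natCast_pow 32 hm2] at hf₀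
    rw [← qParam_mul_natCast_pow 1 hN, one_mul] at hratio
    rw [Nat.cast_mul, Nat.cast_ofNat] at hratio ⊢
    have hprod := hasSum_coeff_mul (hasSum_coeff_expand hm2 hf₀) (hasSum_coeff_expand hN hratio)
    rw [← map_expand, ← map_expand, ← map_mul] at hprod
    simpa only [hF, coeff_map, eq_intCast] using! hprod
  · have ha : PowerSeries.map (Int.castRingHom (ZMod m)) a =
        PowerSeries.map (Int.castRingHom (ZMod m)) (PowerSeries.expand (m ^ 2) hm2 f₀) := by
      rw [map_mul, map_expand _ hN, map_discriminantRatioSeries, map_one, mul_one]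
    have hcoeff := congr_arg (coeff (m ^ 2 * (4 * (8 * n + 1)))) ha
    rw [coeff_map, coeff_map, coeff_expand_mul, coeff_mk, if_pos hn, coeff_etaQuotientSeries,
      eq_intCast, eq_intCast, ← sub_eq_zero, ← Int.cast_sub,
      ZMod.intCast_zmod_eq_zero_iff_dvd] at hcoeff
    convert! hcoeff using 3
    ring

end Coefficients

section Progression

variable {m : ℕ}

theorem exists_prime_dvd_bReg (hm : m.Prime) :
    ∃ Q r, Q.Prime ∧ Q.Coprime m ∧ Q % 8 = 1 ∧ 0 < r ∧
      ∀ n s, 8 * n + 1 = Q ^ r * s → ¬ Q ∣ s → m ∣ 4 * s → m ∣ bReg 4 n := by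
  have hN : 32 * m ^ 2 ≠ 0 := mul_ne_zero (by norm_num) (pow_ne_zero 2 hm.ne_zero)
  have : NeZero (32 * m ^ 2) := ⟨hN⟩
  obtain ⟨Q, hQ, hQgt, hQ1⟩ := Nat.exists_prime_gt_modEq_one (32 * m ^ 2) hN
  have : Fact Q.Prime := ⟨hQ⟩
  have hQN : (Q : ZMod (32 * m ^ 2)) = 1 := by
    simpa using (ZMod.natCast_eq_natCast_iff _ _ _).mpr hQ1
  have hcop : Q.Coprime (32 * m ^ 2) := Nat.coprime_of_lt_prime hN hQgt hQ
  have hQm : Q.Coprime m := hcop.coprime_dvd_right (Dvd.intro_left (32 * m) (by ring))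
  have hk : 0 < 12 * (m ^ 2 - 1) := by
    have := Nat.one_lt_pow two_ne_zero hm.one_lt
    omega
  obtain ⟨a, ha, hab⟩ := exists_mem_integralForms_dvd_sub_bReg hm
  obtain ⟨r, hr, hdvd⟩ := exists_pos_dvd_of_mem_integralForms hm.pos hk hQm hQN ha
  refine ⟨Q, r, hQ, hQm, hQ1.of_dvd ⟨4 * m ^ 2, by ring⟩, hr, fun n s hs hQs hms ↦ ?_⟩
  have hQ4 : ¬ Q ∣ 4 * m ^ 2 * s := fun h ↦
    hQs ((hcop.coprime_dvd_right ⟨8, by ring⟩).dvd_of_dvd_mul_left h)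
  have hm4 : m ∣ 4 * (8 * n + 1) := by
    rw [hs, mul_left_comm]
    exact hms.mul_left _
  have hb := dvd_sub (hdvd _ hQ4) (hab n hm4)
  rw [hs, mul_left_comm _ (Q ^ r), sub_sub_cancel] at hb
  exact_mod_cast hb

lemma exists_mod_eight_eq_one_dvd_four_mul (hm : m.Prime) :
    ∃ ν, ν % 8 = 1 ∧ m ∣ 4 * ν ∧ ∀ Q : ℕ, Q.Coprime m → Q.Coprime ν := by
  obtain rfl | hodd := hm.eq_two_or_odd'
  · exact ⟨1, rfl, by norm_num, fun Q _ ↦ Q.coprime_one_right⟩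
  · refine ⟨m ^ 2, ?_, (dvd_pow_self m two_ne_zero).mul_left 4, fun Q hQ ↦ hQ.pow_right 2⟩
    have hm8 := Nat.eight_dvd_sq_sub_one_of_odd hodd
    have hm0 := pow_pos hm.pos 2
    omega

end Progression

end FourRegular

/-- For every prime `m`, there is a Ramanujan-type congruence
`b_4(An + B) ≡ 0 (mod m)`. -/
theorem b4_ramanujan_type (m : ℕ) (hm : m.Prime) :
    ∃ A B : ℕ, 0 < B ∧ B < A ∧ ∀ n : ℕ, bReg 4 (A * n + B) % m = 0 := by
  obtain ⟨Q, r, hQ, hQm, hQ8, hr, hdvd⟩ := FourRegular.exists_prime_dvd_bReg hm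
  obtain ⟨ν, hν8, hmν, hν⟩ := FourRegular.exists_mod_eight_eq_one_dvd_four_mul hm
  obtain ⟨B, hB⟩ : ∃ B, Q ^ r * ν = 8 * B + 1 := by
    have h8 : Q ^ r * ν % 8 = 1 := by simp [Nat.mul_mod, Nat.pow_mod, hQ8, hν8]
    exact ⟨Q ^ r * ν / 8, by omega⟩
  have hQν : 1 < Q ^ r * ν :=
    (Nat.one_lt_pow hr.ne' hQ.one_lt).trans_le (Nat.le_mul_of_pos_right _ (by omega))
  have hQB : 8 * B + 1 ≤ Q * (8 * B + 1) := Nat.le_mul_of_pos_left _ hQ.pos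
  refine ⟨Q * (8 * B + 1), B, by omega, by omega, fun n ↦ Nat.mod_eq_zero_of_dvd ?_⟩
  have hcop : Q.Coprime (ν * (Q * (8 * n) + 1)) := (hν Q hQm).mul_right (by simp)
  refine hdvd _ (ν * (Q * (8 * n) + 1)) ?_ (hQ.coprime_iff_not_dvd.mp hcop) ?_
  · rw [← mul_assoc, hB]
    ring
  · rw [← mul_assoc]
    exact hmν.mul_right _
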